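/- Let n ≥ 2 and a = (a_1,…,a_n) ∈ ℂ^n with each a_j purely imaginary, let σ ∈ ℂ with Re(σ) > 0, and let p_1,…,p_{n−1} ∈ ℂ with Re(p_j) > 0 for all j; set p_n := −|a|. Then U_{n,a}(p_1,…,p_{n−1}) = [Γ_ℝ(p_1+σ) / ∏_{j=1}^{n} Γ_ℝ(σ−a_j)] · (1/(4πi)^{n−1})·∫_{q_1,…,q_{n−1}} U_{n,a}(q_1,…,q_{n−1})·∏_{j=1}^{n−1} Γ_ℝ(p_j−q_j)·Γ_ℝ(p_{j+1}−q_j+σ) dq_1⋯dq_{n−1}. -/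

import Mathlib

open MeasureTheory Complex

noncomputable section

/-- `Γ_ℝ(s) = π^{-s/2} Γ(s/2)`. -/
def GammaR (s : ℂ) : ℂ := (Real.pi : ℂ) ^ (-s / 2) * Complex.Gamma (s / 2)

/-- Modified Bessel function of the second kind, via its integral representation. -/
def BesselK (ν : ℂ) (y : ℝ) : ℂ :=
  (1 / 2) * ∫ t in Set.Ioi (0 : ℝ),
    Complex.exp (-((y : ℂ) / 2) * ((t : ℂ) + 1 / (t : ℂ))) * (t : ℂ) ^ ν / (t : ℂ)

/-- Extend a finite real tuple to `ℕ`, defaulting to `1`. -/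
def extR {k : ℕ} (t : Fin k → ℝ) : ℕ → ℝ := fun i => if h : i < k then t ⟨i, h⟩ else 1

/-- Extend a finite real tuple to `ℕ`, defaulting to `0`. -/
def extR0 {k : ℕ} (t : Fin k → ℝ) : ℕ → ℝ := fun i => if h : i < k then t ⟨i, h⟩ else 0

/-- The positive orthant. -/
def posSet (k : ℕ) : Set (Fin k → ℝ) := {t | ∀ j, 0 < t j}

/-- `|a| = a_1 + ⋯ + a_n` (0-based indexing). -/
def sumA (n : ℕ) (a : ℕ → ℂ) : ℂ := ∑ j ∈ Finset.range n, a j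

/-- `ã_j = a_{j+1} + a_1/(n-1)` (0-based indexing). -/
def tildeA (n : ℕ) (a : ℕ → ℂ) : ℕ → ℂ := fun j => a (j + 1) + a 0 / ((n : ℂ) - 1)

/-- The normalized radial part `Ŵ^A_{n,a}` of the class one `GL_n(ℝ)` Whittaker function,
as a function of `(y_1,…,y_{n-1})` (0-based indexing). -/
def WhittAr : ℕ → (ℕ → ℂ) → (ℕ → ℝ) → ℂ
  | 0, _, _ => 1
  | 1, _, _ => 1
  | 2, a, y => 2 * ((y 0 : ℂ) ^ ((a 0 + a 1) / 2)) *
      BesselK ((a 0 - a 1) / 2) (2 * Real.pi * y 0)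
  | (n + 3), a, y =>
      ∫ t in posSet (n + 2),
        WhittAr (n + 2) (tildeA (n + 3) a)
            (fun j => y (j + 1) * Real.sqrt (extR t (j + 1) / extR t j)) *
          (∏ j ∈ Finset.range (n + 2),
            Complex.exp (((-(Real.pi * y j) ^ 2 * extR t j - 1 / extR t j : ℝ) : ℂ)) *
              ((Real.pi * y j : ℝ) : ℂ) ^ ((((n + 2 - j : ℕ) : ℂ) * a 0) / ((n + 2 : ℕ) : ℂ)) *
              ((extR t j : ℝ) : ℂ) ^ ((((n + 3 : ℕ) : ℂ) * a 0) / (2 * ((n + 2 : ℕ) : ℂ)))) *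
          ((Real.pi * extR t (n + 1) : ℝ) : ℂ) ^ (-(sumA (n + 3) a) / 2) *
          (∏ j ∈ Finset.range (n + 2), ((extR t j : ℝ) : ℂ))⁻¹

/-- `Ŵ^A_{n,a}` as a function of the full tuple `(y_1,…,y_n)`. -/
def WhittAhat (n : ℕ) (a : ℕ → ℂ) (y : ℕ → ℝ) : ℂ :=
  ((y (n - 1) : ℝ) : ℂ) ^ sumA n a * WhittAr n a y

/-- The Mellin transform `U_{n,a}` (0-based: `s j` stands for `s_{j+1}`). -/
def Ufun (n : ℕ) (a : ℕ → ℂ) (s : ℕ → ℂ) : ℂ :=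
  ∫ y in posSet (n - 1),
    WhittAr n a (extR y) *
      ∏ j ∈ Finset.range (n - 1), ((extR y j : ℝ) : ℂ) ^ s j / ((extR y j : ℝ) : ℂ)

/-- The normalized radial part `Ŵ^B_{n,b}` of the class one `SO_{2n+1}(ℝ)` Whittaker function. -/
def WhittBr : ℕ → (ℕ → ℂ) → (ℕ → ℝ) → ℂ
  | 0, _, _ => 1
  | 1, b, y => 2 * BesselK (b 0 / 2) (2 * Real.pi * y 0)
  | (n + 2), b, y =>
      ∫ p in (posSet (n + 2) ×ˢ posSet (n + 1)),
        WhittBr (n + 1) b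
            (fun j =>
              if j < n then
                y (j + 1) *
                  Real.sqrt (extR p.1 (j + 1) * extR p.2 (j + 1) /
                    (extR p.1 (j + 2) * extR p.2 j))
              else y (n + 1) * Real.sqrt (extR p.1 (n + 1) / extR p.2 n)) *
          (∏ j ∈ Finset.range (n + 2),
            Complex.exp (((-(Real.pi * y j) ^ 2 * extR p.1 j - 1 / extR p.1 j : ℝ) : ℂ)) *
              ((Real.pi * y j : ℝ) : ℂ) ^ b (n + 1)) *
          (∏ j ∈ Finset.range (n + 1),
            Complex.exp (((-(Real.pi * y j) ^ 2 * (extR p.1 j / extR p.1 (j + 1)) * extR p.2 j -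
                  1 / extR p.2 j : ℝ) : ℂ)) *
              ((extR p.1 (j + 1) * extR p.2 j : ℝ) : ℂ) ^ (b (n + 1) / 2)) *
          ((extR p.1 0 : ℝ) : ℂ) ^ b (n + 1) *
          (∏ j ∈ Finset.range (n + 1), ((extR p.2 j : ℝ) : ℂ))⁻¹ *
          (∏ j ∈ Finset.range (n + 2), ((extR p.1 j : ℝ) : ℂ))⁻¹

/-- The Mellin transform `V_{n,b}` (0-based: `s j` stands for `s_{j+1}`). -/
def Vfun (n : ℕ) (b : ℕ → ℂ) (s : ℕ → ℂ) : ℂ :=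
  ∫ y in posSet n,
    WhittBr n b (extR y) *
      ∏ j ∈ Finset.range n, ((extR y j : ℝ) : ℂ) ^ s j / ((extR y j : ℝ) : ℂ)

/-- Integral over the vertical line `Re z = c`, i.e. `i·∫_ℝ f(c+it) dt`. -/
def VInt (c : ℝ) (f : ℂ → ℂ) : ℂ := Complex.I * ∫ t : ℝ, f (c + t * Complex.I)

/-- Iterated integral over `k` vertical lines with abscissas `c 0, …, c (k-1)`;
the integrand is fed the contour points as a 0-based sequence. -/
def VIntK (k : ℕ) (c : ℕ → ℝ) (f : (ℕ → ℂ) → ℂ) : ℂ :=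
  Complex.I ^ k * ∫ t : Fin k → ℝ, f (fun i => (c i : ℂ) + (extR0 t i : ℝ) * Complex.I)



/-- The extension of `p_1,…,p_{n-1}` by the conventions `p_0 = 0`, `p_n = -|a|`
(1-based indexing). -/
def PextL (n : ℕ) (a : ℕ → ℂ) (p : ℕ → ℂ) : ℕ → ℂ :=
  fun i => if i = 0 then 0 else if i ≤ n - 1 then p (i - 1) else -sumA n a

lemma GammaR_eq (s : ℂ) : GammaR s = Complex.Gammaℝ s := rfl

lemma measurable_GammaR : Measurable GammaR := by
  have h : GammaR = fun s => ((Complex.Gammaℝ s)⁻¹)⁻¹ := by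
    ext s
    rw [inv_inv, GammaR_eq]
  rw [h]
  exact (Complex.differentiable_Gammaℝ_inv.continuous.measurable).inv

lemma measurable_Gamma : Measurable Complex.Gamma := by
  have h : Complex.Gamma = fun s => ((Complex.Gamma s)⁻¹)⁻¹ := by simp
  rw [h]
  exact (Complex.differentiable_one_div_Gamma.continuous.measurable).inv

lemma GammaR_ne_zero {s : ℂ} (hs : 0 < s.re) : GammaR s ≠ 0 :=
  Complex.Gammaℝ_ne_zero_of_re_pos hs

lemma norm_Gamma_le_Gamma_re {s : ℂ} (hs : 0 < s.re) : ‖Complex.Gamma s‖ ≤ Real.Gamma s.re := by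
  rw [Complex.Gamma_eq_integral hs, Real.Gamma_eq_integral hs, Complex.GammaIntegral]
  refine (norm_integral_le_integral_norm _).trans_eq ?_
  refine setIntegral_congr_fun measurableSet_Ioi fun x hx => ?_
  simp only [norm_mul, norm_real, Real.norm_eq_abs, Real.abs_exp]
  rw [norm_cpow_eq_rpow_re_of_pos hx]
  simp

lemma norm_GammaR_le {s : ℂ} (hs : 0 < s.re) : ‖GammaR s‖ ≤ ‖GammaR (s.re : ℂ)‖ := by
  have hs2 : 0 < (s / 2).re := by simp; linarith
  have h1 := norm_Gamma_le_Gamma_re hs2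
  have h2 : Complex.Gamma ((s.re : ℂ) / 2) = (Real.Gamma (s / 2).re : ℂ) := by
    rw [← Complex.Gamma_ofReal]; simp
  rw [GammaR, GammaR, norm_mul, norm_mul, h2, norm_cpow_eq_rpow_re_of_pos Real.pi_pos,
    norm_cpow_eq_rpow_re_of_pos Real.pi_pos, norm_real, Real.norm_eq_abs]
  have h3 : (-s / 2).re = (-(s.re : ℂ) / 2).re := by simp
  rw [h3]
  gcongr
  exact h1.trans (le_abs_self _)

/-- The Gamma function decays integrably along vertical lines in the right half plane. -/
lemma integrable_Gamma_vertical {z : ℂ} (hz : 0 < z.re) :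
    Integrable fun t : ℝ => Complex.Gamma (z + t * I) := by
  suffices h : ∀ r : ℝ, 0 < r → Integrable fun t : ℝ => Complex.Gamma ((r : ℂ) + t * I) by
    have := (h z.re hz).comp_add_right z.im
    refine this.congr (.of_forall fun t => ?_)
    simp only
    congr 1
    conv_rhs => rw [← re_add_im z]
    push_cast; ring
  intro r hr
  set m : ℝ := min (r ^ 2) 1 with hm
  have hm0 : 0 < m := by positivity
  have hbound : ∀ t : ℝ, ‖Complex.Gamma ((r : ℂ) + t * I)‖ ≤
      (Real.Gamma (r + 2) / m) * (1 + t ^ 2)⁻¹ := by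
    intro t
    set s : ℂ := (r : ℂ) + t * I with hs
    have hsr : s.re = r := by simp [hs]
    have hsi : s.im = t := by simp [hs]
    have hs0 : s ≠ 0 := fun h => by rw [h] at hsr; simp at hsr; linarith
    have hs1 : s + 1 ≠ 0 := fun h => by
      have := congrArg re h
      simp [hsr] at this; linarith
    have hrec : Complex.Gamma (s + 1 + 1) = (s + 1) * (s * Complex.Gamma s) := by
      rw [Complex.Gamma_add_one _ hs1, Complex.Gamma_add_one _ hs0]
    have h1 : ‖Complex.Gamma (s + 1 + 1)‖ ≤ Real.Gamma (r + 2) := by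
      have := norm_Gamma_le_Gamma_re (s := s + 1 + 1) (by simp [hsr]; linarith)
      have e : (s + 1 + 1).re = r + 2 := by simp [hsr]; ring
      rwa [e] at this
    rw [hrec, norm_mul, norm_mul] at h1
    have h2 : ‖s‖ ≤ ‖s + 1‖ := by
      rw [← sq_le_sq₀ (norm_nonneg _) (norm_nonneg _), ← normSq_eq_norm_sq, ← normSq_eq_norm_sq,
        normSq_apply, normSq_apply]
      simp [hsr, hsi]; nlinarith
    have h3 : m * (1 + t ^ 2) ≤ ‖s‖ * ‖s‖ := by
      rw [← sq, ← normSq_eq_norm_sq, normSq_apply, hsr, hsi]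
      have := min_le_left (r ^ 2) 1
      have := min_le_right (r ^ 2) 1
      nlinarith [sq_nonneg t]
    have h4 : m * (1 + t ^ 2) * ‖Complex.Gamma s‖ ≤ Real.Gamma (r + 2) := by
      refine le_trans ?_ h1
      rw [← mul_assoc]
      refine mul_le_mul_of_nonneg_right (h3.trans ?_) (norm_nonneg _)
      gcongr
    rw [div_mul_eq_mul_div, le_div_iff₀ hm0, ← div_eq_mul_inv, le_div_iff₀ (by positivity)]
    linarith
  refine Integrable.mono' (integrable_inv_one_add_sq.const_mul _) ?_ (.of_forall hbound)
  exact (measurable_Gamma.comp (by fun_prop)).aestronglyMeasurable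

lemma integrable_GammaR_vertical {z : ℂ} (hz : 0 < z.re) :
    Integrable fun t : ℝ => GammaR (z + t * I) := by
  have h1 := (integrable_Gamma_vertical (z := z / 2) (by simp; linarith)).comp_mul_right'
    (R := 1 / 2) (by norm_num)
  have h2 := h1.bdd_mul (f := fun t : ℝ => (Real.pi : ℂ) ^ (-(z + t * I) / 2))
    (c := Real.pi ^ (-z.re / 2))
    (Measurable.aestronglyMeasurable (by fun_prop)) (.of_forall fun t => by
      rw [norm_cpow_eq_rpow_re_of_pos Real.pi_pos]; simp)
  refine h2.congr (.of_forall fun t => ?_)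
  simp only [GammaR]
  congr 2
  push_cast; ring

/-- Mellin transform of a multiplicative convolution. -/
lemma hasMellin_convolution {f g : ℝ → ℂ} (hf : Measurable f) (hg : Measurable g) {s w : ℂ}
    (hfs : MellinConvergent f s) (hgs : MellinConvergent g (w - s)) :
    HasMellin (fun y : ℝ => ∫ τ in Set.Ioi (0 : ℝ), f (y * τ) * (g τ * (τ : ℂ) ^ (w - 1))) s
      (mellin f s * mellin g (w - s)) := by
  set ν := (volume : Measure ℝ).restrict (Set.Ioi 0) with hν
  let F : ℝ → ℝ → ℂ := fun y τ => (y : ℂ) ^ (s - 1) * (f (y * τ) * (g τ * (τ : ℂ) ^ (w - 1)))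
  have hFm : Measurable (Function.uncurry F) := by
    simp only [F, Function.uncurry_def]
    fun_prop
  have hτ : ∀ᵐ τ ∂ν, 0 < τ := ae_restrict_mem measurableSet_Ioi
  have hscale : ∀ τ : ℝ, 0 < τ → ∀ y ∈ Set.Ioi (0 : ℝ), F y τ =
      (g τ * (τ : ℂ) ^ (w - 1) * (τ : ℂ) ^ (1 - s)) *
        (fun u : ℝ => (u : ℂ) ^ (s - 1) • f u) (y * τ) := by
    intro τ hτ y hy
    simp only [F, smul_eq_mul, ofReal_mul]
    rw [mul_cpow_ofReal_nonneg (le_of_lt hy) hτ.le]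
    have : (τ : ℂ) ^ (1 - s) * (τ : ℂ) ^ (s - 1) = 1 := by
      rw [← cpow_add _ _ (ofReal_ne_zero.mpr hτ.ne')]; simp
    linear_combination (-(y : ℂ) ^ (s - 1) * f (y * τ) * g τ * (τ : ℂ) ^ (w - 1)) * this
  have hτs : ∀ τ : ℝ, 0 < τ → (τ : ℂ) ^ (w - 1) * (τ : ℂ) ^ (1 - s) * (τ : ℂ)⁻¹ =
      (τ : ℂ) ^ (w - s - 1) := by
    intro τ hτ
    have h0 : (τ : ℂ) ≠ 0 := ofReal_ne_zero.mpr hτ.ne'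
    rw [← cpow_neg_one, ← cpow_add _ _ h0, ← cpow_add _ _ h0]
    congr 1; ring
  have hint : Integrable (Function.uncurry F) (ν.prod ν) := by
    rw [integrable_prod_iff' hFm.aestronglyMeasurable]
    constructor
    · filter_upwards [hτ] with τ hτ
      have h1 := (integrableOn_Ioi_comp_mul_right_iff
        (fun u : ℝ => (u : ℂ) ^ (s - 1) • f u) 0 hτ).2 (by rw [zero_mul]; exact hfs)
      have h2 := h1.const_mul (g τ * (τ : ℂ) ^ (w - 1) * (τ : ℂ) ^ (1 - s))
      exact (integrableOn_congr_fun (hscale τ hτ) measurableSet_Ioi).2 h2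
    · have h3 : Integrable (fun τ : ℝ => ‖(τ : ℂ) ^ (w - s - 1) • g τ‖ *
          ∫ u in Set.Ioi (0 : ℝ), ‖(u : ℂ) ^ (s - 1) • f u‖) ν := (hgs.norm).mul_const _
      refine h3.congr ?_
      filter_upwards [hτ] with τ hτ
      have h4 : ∫ y, ‖Function.uncurry F (y, τ)‖ ∂ν =
          ∫ y in Set.Ioi (0 : ℝ), ‖g τ * (τ : ℂ) ^ (w - 1) * (τ : ℂ) ^ (1 - s)‖ *
            (fun u : ℝ => ‖(u : ℂ) ^ (s - 1) • f u‖) (y * τ) := by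
        refine setIntegral_congr_fun measurableSet_Ioi fun y hy => ?_
        simp only [Function.uncurry_apply_pair]
        rw [hscale τ hτ y hy, norm_mul]
      rw [h4, integral_const_mul,
        integral_comp_mul_right_Ioi (fun u : ℝ => ‖(u : ℂ) ^ (s - 1) • f u‖) 0 hτ, zero_mul, ← hτs τ hτ]
      simp only [norm_mul, smul_eq_mul, norm_inv, norm_real, Real.norm_eq_abs, abs_of_pos hτ]
      ring
  have hpull : ∀ y : ℝ, ∫ τ, F y τ ∂ν = (y : ℂ) ^ (s - 1) •
      ∫ τ in Set.Ioi (0 : ℝ), f (y * τ) * (g τ * (τ : ℂ) ^ (w - 1)) := by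
    intro y
    simp only [F]
    rw [integral_const_mul, smul_eq_mul]
  refine ⟨?_, ?_⟩
  · refine hint.integral_prod_left.congr (.of_forall fun y => ?_)
    exact hpull y
  · rw [mellin, ← hν, ← integral_congr_ae (.of_forall hpull)]
    rw [integral_integral_swap hint, mellin, mellin, ← integral_const_mul]
    refine setIntegral_congr_fun measurableSet_Ioi fun τ hτ => ?_
    rw [hν, setIntegral_congr_fun measurableSet_Ioi (hscale τ hτ), integral_const_mul,
      integral_comp_mul_right_Ioi (fun u : ℝ => (u : ℂ) ^ (s - 1) • f u) 0 hτ, zero_mul,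
      ← hτs τ hτ]
    simp only [smul_eq_mul, real_smul, ofReal_inv]
    ring

lemma hasMellin_exp_neg {s : ℂ} (hs : 0 < s.re) :
    HasMellin (fun x : ℝ => cexp (-(x : ℂ))) s (Complex.Gamma s) := by
  constructor
  · refine (Complex.GammaIntegral_convergent hs).congr_fun (fun x _ => ?_) measurableSet_Ioi
    simp [mul_comm]
  · rw [Complex.Gamma_eq_integral hs, Complex.GammaIntegral, mellin]
    congr 1 with x
    simp [mul_comm]

lemma barnes_mellin_hasMellin {a c s : ℂ} (has : 0 < (a + s).re) (hcs : 0 < (c - s).re) :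
    HasMellin (fun x : ℝ => (x : ℂ) ^ a * (Complex.Gamma (a + c) * (1 + (x : ℂ)) ^ (-(a + c))))
      s (Complex.Gamma (a + s) * Complex.Gamma (c - s)) := by
  have hm : Measurable fun x : ℝ => cexp (-(x : ℂ)) := by fun_prop
  have e : a + c - (s + a) = c - s := by ring
  have hac : 0 < (a + c).re := by
    have : (a + c).re = (a + s).re + (c - s).re := by simp
    linarith
  have h := hasMellin_convolution hm hm (s := s + a) (w := a + c)
    (hasMellin_exp_neg (by rwa [add_comm])).1 (hasMellin_exp_neg (by rwa [e])).1
  rw [e, (hasMellin_exp_neg (s := s + a) (by rwa [add_comm])).2, (hasMellin_exp_neg hcs).2] at h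
  have key : ∀ y ∈ Set.Ioi (0 : ℝ), ∫ τ in Set.Ioi (0 : ℝ),
      cexp (-((y * τ : ℝ) : ℂ)) * (cexp (-(τ : ℂ)) * (τ : ℂ) ^ (a + c - 1)) =
      Complex.Gamma (a + c) * (1 + (y : ℂ)) ^ (-(a + c)) := by
    intro y hy
    have hy' : (0 : ℝ) < 1 + y := by linarith [Set.mem_Ioi.1 hy]
    have h1 := integral_cpow_mul_exp_neg_mul_Ioi hac hy'
    have h2 : (1 / ((1 + y : ℝ) : ℂ)) ^ (a + c) = (1 + (y : ℂ)) ^ (-(a + c)) := by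
      rw [one_div, inv_cpow _ _ (by rw [arg_ofReal_of_nonneg hy'.le]; exact Real.pi_pos.ne),
        ← cpow_neg]
      push_cast; rfl
    rw [h2] at h1
    rw [mul_comm, ← h1]
    congr 1 with τ
    rw [← mul_assoc, ← Complex.exp_add, mul_comm]
    congr 2
    push_cast; ring
  constructor
  · have h3 : MellinConvergent (fun x : ℝ => (Complex.Gamma (a + c) *
        (1 + (x : ℂ)) ^ (-(a + c)))) (s + a) :=
      h.1.congr_fun (fun y hy => by simp only; rw [key y hy]) measurableSet_Ioi
    exact MellinConvergent.cpow_smul.2 h3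
  · have h4 := mellin_cpow_smul (fun x : ℝ => (Complex.Gamma (a + c) *
        (1 + (x : ℂ)) ^ (-(a + c)))) s a
    simp only [smul_eq_mul] at h4
    rw [h4, add_comm a s, ← h.2]
    exact setIntegral_congr_fun measurableSet_Ioi fun y hy => by simp only; rw [key y hy]

lemma integrable_Gamma_mul_Gamma_vertical {a c : ℂ} (ha : 0 < a.re) (hc : 0 < c.re) :
    Integrable fun t : ℝ => Complex.Gamma (a + t * I) * Complex.Gamma (c - t * I) := by
  have h := (integrable_Gamma_vertical ha).bdd_mul
    (f := fun t : ℝ => Complex.Gamma (c - t * I)) (c := Real.Gamma c.re)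
    (measurable_Gamma.comp (by fun_prop)).aestronglyMeasurable
    (.of_forall fun t => by
      simpa using norm_Gamma_le_Gamma_re (s := c - t * I) (by simpa using hc))
  exact h.congr (.of_forall fun t => mul_comm _ _)

lemma continuousAt_barnes_kernel (a w C : ℂ) {x : ℝ} (hx : 0 < x) :
    ContinuousAt (fun x : ℝ => (x : ℂ) ^ a * (C * (1 + (x : ℂ)) ^ w)) x := by
  have h1 : (x : ℂ) ∈ slitPlane := by simp [slitPlane, hx]
  have h2 : (1 + (x : ℂ)) ∈ slitPlane := by
    left; simp; linarith
  have h3 : ContinuousAt (fun x : ℝ => (x : ℂ) ^ a) x :=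
    (continuous_ofReal.continuousAt).cpow continuousAt_const h1
  have h4 : ContinuousAt (fun x : ℝ => (1 + (x : ℂ)) ^ w) x :=
    (by fun_prop : ContinuousAt (fun x : ℝ => (1 + (x : ℂ))) x).cpow continuousAt_const h2
  exact h3.mul (continuousAt_const.mul h4)

/-- Barnes' first lemma for the Gamma function, on the imaginary axis. -/
lemma Gamma_barnes_first {a b c d : ℂ} (ha : 0 < a.re) (hb : 0 < b.re) (hc : 0 < c.re)
    (hd : 0 < d.re) :
    ∫ t : ℝ, Complex.Gamma (a + t * I) * Complex.Gamma (c - t * I) *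
        (Complex.Gamma (b + t * I) * Complex.Gamma (d - t * I)) =
      2 * Real.pi * (Complex.Gamma (a + c) * Complex.Gamma (b + d) *
        (Complex.Gamma (a + d) * Complex.Gamma (b + c)) / Complex.Gamma (a + b + c + d)) := by
  set φ : ℝ → ℂ := fun x => (x : ℂ) ^ a * (Complex.Gamma (a + c) * (1 + (x : ℂ)) ^ (-(a + c)))
  set ψ : ℝ → ℂ := fun x => (x : ℂ) ^ d * (Complex.Gamma (d + b) * (1 + (x : ℂ)) ^ (-(d + b)))
  have hφ : ∀ t : ℝ, HasMellin φ (t * I)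
      (Complex.Gamma (a + t * I) * Complex.Gamma (c - t * I)) := fun t =>
    barnes_mellin_hasMellin (by simpa using ha) (by simpa using hc)
  have hψ : ∀ t : ℝ, HasMellin ψ (-(t * I))
      (Complex.Gamma (d - t * I) * Complex.Gamma (b + t * I)) := fun t => by
    have := barnes_mellin_hasMellin (a := d) (c := b) (s := -(t * I))
      (by simpa using hd) (by simpa using hb)
    rwa [← sub_eq_add_neg, sub_neg_eq_add] at this
  have hinv : ∀ x : ℝ, 0 < x → ∫ t : ℝ, (x : ℂ) ^ (-(t * I)) *
      (Complex.Gamma (a + t * I) * Complex.Gamma (c - t * I)) = 2 * Real.pi * φ x := by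
    intro x hx
    have h1 : VerticalIntegrable (mellin φ) 0 := by
      refine (integrable_Gamma_mul_Gamma_vertical ha hc).congr (.of_forall fun t => ?_)
      simp only [ofReal_zero, zero_add]
      rw [(hφ t).2]
    have h2 := mellinInv_mellin_eq 0 φ hx (by simpa using (hφ 0).1) h1
      (continuousAt_barnes_kernel _ _ _ hx)
    rw [mellinInv] at h2
    rw [← h2, ← Complex.coe_smul, smul_eq_mul, ← mul_assoc]
    have : (2 * (Real.pi : ℂ)) * ((1 / (2 * Real.pi) : ℝ) : ℂ) = 1 := by
      push_cast
      field_simp [Real.pi_ne_zero]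
    rw [this, one_mul]
    congr 1 with t
    rw [ofReal_zero, zero_add, (hφ t).2, smul_eq_mul]
  have hψm : Measurable ψ := by simp only [ψ]; fun_prop
  set ν := (volume : Measure ℝ).restrict (Set.Ioi 0) with hν
  let F : ℝ → ℝ → ℂ := fun t x => (Complex.Gamma (a + t * I) * Complex.Gamma (c - t * I)) *
    ((x : ℂ) ^ (-(t * I) - 1) * ψ x)
  have hGm : Measurable fun t : ℝ => Complex.Gamma (a + t * I) * Complex.Gamma (c - t * I) :=
    (measurable_Gamma.comp (by fun_prop)).mul (measurable_Gamma.comp (by fun_prop))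
  have hint : Integrable (Function.uncurry F) ((volume : Measure ℝ).prod ν) := by
    have h0 : MellinConvergent ψ 0 := by simpa using (hψ 0).1
    have h1 := (integrable_Gamma_mul_Gamma_vertical ha hc).mul_prod (ν := ν)
      (g := fun x : ℝ => (x : ℂ) ^ ((0 : ℂ) - 1) • ψ x) h0
    refine h1.mono ?_ ?_
    · refine Measurable.aestronglyMeasurable ?_
      simp only [F, Function.uncurry_def]
      exact (hGm.comp measurable_fst).mul (by fun_prop)
    · have : ∀ᵐ p : ℝ × ℝ ∂((volume : Measure ℝ).prod ν), 0 < p.2 :=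
        Measure.quasiMeasurePreserving_snd.ae (ae_restrict_mem measurableSet_Ioi)
      filter_upwards [this] with p hp
      simp only [F, Function.uncurry_def, norm_mul, smul_eq_mul]
      rw [norm_cpow_eq_rpow_re_of_pos hp, norm_cpow_eq_rpow_re_of_pos hp]
      simp
  have hswap := integral_integral_swap hint
  have hL : ∀ t : ℝ, ∫ x, F t x ∂ν = Complex.Gamma (a + t * I) * Complex.Gamma (c - t * I) *
        (Complex.Gamma (b + t * I) * Complex.Gamma (d - t * I)) := by
    intro t
    simp only [F]
    rw [integral_const_mul, mul_comm (Complex.Gamma (b + t * I)), ← (hψ t).2]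
    rfl
  simp_rw [hL] at hswap
  rw [hswap]
  have hsum : (0 : ℝ) < (a + b + c + d).re := by simp; linarith
  have hbeta := barnes_mellin_hasMellin (a := a + d) (c := b + c) (s := 0)
    (by simp; linarith) (by simp; linarith)
  have hne := Complex.Gamma_ne_zero_of_re_pos hsum
  have hR : ∀ x ∈ Set.Ioi (0 : ℝ), ∫ t : ℝ, F t x =
      (2 * Real.pi * Complex.Gamma (a + c) * Complex.Gamma (b + d) /
        Complex.Gamma (a + b + c + d)) * ((x : ℂ) ^ ((0 : ℂ) - 1) • ((x : ℂ) ^ (a + d) *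
        (Complex.Gamma (a + d + (b + c)) * (1 + (x : ℂ)) ^ (-(a + d + (b + c)))))) := by
    intro x hx
    have hx0 : (x : ℂ) ≠ 0 := ofReal_ne_zero.mpr (ne_of_gt hx)
    have hx1 : (1 + (x : ℂ)) ≠ 0 := by
      have : ((1 + x : ℝ) : ℂ) ≠ 0 := ofReal_ne_zero.mpr (by linarith [Set.mem_Ioi.1 hx])
      simpa using this
    have h1 : ∀ t : ℝ, F t x = (ψ x * (x : ℂ) ^ (-1 : ℂ)) * ((x : ℂ) ^ (-(t * I)) *
      (Complex.Gamma (a + t * I) * Complex.Gamma (c - t * I))) := by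
      intro t
      simp only [F]
      rw [sub_eq_add_neg (-(t * I : ℂ)), cpow_add _ _ hx0]; ring
    simp_rw [h1]
    rw [integral_const_mul, hinv x hx]
    simp only [φ, ψ, smul_eq_mul]
    have e1 : a + d + (b + c) = a + b + c + d := by ring
    have e2 : (1 + (x : ℂ)) ^ (-(a + b + c + d)) = (1 + (x : ℂ)) ^ (-(a + c)) *
        (1 + (x : ℂ)) ^ (-(d + b)) := by
      rw [← cpow_add _ _ hx1]; congr 1; ring
    rw [e1, e2, cpow_add _ _ hx0, zero_sub, add_comm d b]
    field_simp
  rw [setIntegral_congr_fun measurableSet_Ioi hR, integral_const_mul]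
  have := hbeta.2
  rw [mellin] at this
  rw [this, add_zero, sub_zero]
  ring

/-- Barnes' first lemma for `Γ_ℝ`. -/
lemma GammaR_barnes_first {a b c d : ℂ} (ha : 0 < a.re) (hb : 0 < b.re) (hc : 0 < c.re)
    (hd : 0 < d.re) :
    ∫ t : ℝ, GammaR (a + t * I) * GammaR (b + t * I) * GammaR (c - t * I) * GammaR (d - t * I) =
      4 * Real.pi * (GammaR (a + c) * GammaR (a + d) * GammaR (b + c) * GammaR (b + d) /
        GammaR (a + b + c + d)) := by
  have hpi : (Real.pi : ℂ) ≠ 0 := ofReal_ne_zero.mpr Real.pi_ne_zero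
  have h := Gamma_barnes_first (a := a / 2) (b := b / 2) (c := c / 2) (d := d / 2)
    (by simp; linarith) (by simp; linarith) (by simp; linarith) (by simp; linarith)
  have h1 : ∀ t : ℝ, GammaR (a + t * I) * GammaR (b + t * I) * GammaR (c - t * I) *
      GammaR (d - t * I) = (Real.pi : ℂ) ^ (-(a + b + c + d) / 2) *
      (fun u : ℝ => Complex.Gamma (a / 2 + u * I) * Complex.Gamma (c / 2 - u * I) *
        (Complex.Gamma (b / 2 + u * I) * Complex.Gamma (d / 2 - u * I))) (t / 2) := by
    intro t
    have e : (Real.pi : ℂ) ^ (-(a + b + c + d) / 2) = (Real.pi : ℂ) ^ (-(a + t * I) / 2) *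
        (Real.pi : ℂ) ^ (-(b + t * I) / 2) * (Real.pi : ℂ) ^ (-(c - t * I) / 2) *
        (Real.pi : ℂ) ^ (-(d - t * I) / 2) := by
      rw [← cpow_add _ _ hpi, ← cpow_add _ _ hpi, ← cpow_add _ _ hpi]
      congr 1; ring
    rw [e]
    simp only [GammaR]
    have e1 : a / 2 + ((t / 2 : ℝ) : ℂ) * I = (a + t * I) / 2 := by push_cast; ring
    have e2 : b / 2 + ((t / 2 : ℝ) : ℂ) * I = (b + t * I) / 2 := by push_cast; ring
    have e3 : c / 2 - ((t / 2 : ℝ) : ℂ) * I = (c - t * I) / 2 := by push_cast; ring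
    have e4 : d / 2 - ((t / 2 : ℝ) : ℂ) * I = (d - t * I) / 2 := by push_cast; ring
    rw [e1, e2, e3, e4]
    ring
  simp_rw [h1]
  rw [integral_const_mul, Measure.integral_comp_div (fun u : ℝ =>
      Complex.Gamma (a / 2 + u * I) * Complex.Gamma (c / 2 - u * I) *
        (Complex.Gamma (b / 2 + u * I) * Complex.Gamma (d / 2 - u * I))), h]
  have e : (Real.pi : ℂ) ^ (-(a + c) / 2) * (Real.pi : ℂ) ^ (-(a + d) / 2) *
      (Real.pi : ℂ) ^ (-(b + c) / 2) * (Real.pi : ℂ) ^ (-(b + d) / 2) =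
      (Real.pi : ℂ) ^ (-(a + b + c + d) / 2) * (Real.pi : ℂ) ^ (-(a + b + c + d) / 2) := by
    rw [← cpow_add _ _ hpi, ← cpow_add _ _ hpi, ← cpow_add _ _ hpi, ← cpow_add _ _ hpi]
    congr 1; ring
  have hp : (Real.pi : ℂ) ^ (-(a + b + c + d) / 2) ≠ 0 := by simp [cpow_eq_zero_iff, hpi]
  simp only [GammaR, abs_of_pos (two_pos : (0 : ℝ) < 2), real_smul]
  rw [show a / 2 + c / 2 = (a + c) / 2 by ring, show b / 2 + d / 2 = (b + d) / 2 by ring,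
    show a / 2 + d / 2 = (a + d) / 2 by ring, show b / 2 + c / 2 = (b + c) / 2 by ring,
    show a / 2 + b / 2 + c / 2 + d / 2 = (a + b + c + d) / 2 by ring]
  have hne : Complex.Gamma ((a + b + c + d) / 2) ≠ 0 :=
    Complex.Gamma_ne_zero_of_re_pos (by simp; linarith)
  rw [← mul_div_assoc, ← mul_div_assoc, ← mul_div_assoc, ← mul_div_assoc,
    div_eq_div_iff hne (mul_ne_zero hp hne)]
  push_cast
  linear_combination (-4 * Real.pi * Complex.Gamma ((a + c) / 2) * Complex.Gamma ((a + d) / 2) *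
    Complex.Gamma ((b + c) / 2) * Complex.Gamma ((b + d) / 2) *
    Complex.Gamma ((a + b + c + d) / 2)) * e

/-- The integrand of the integral representation of the `GL_2` Whittaker function. -/
def kerInt (ν : ℂ) (x τ : ℝ) : ℂ :=
  cexp (-((x * τ : ℝ) : ℂ)) * (cexp (-((τ⁻¹ : ℝ) : ℂ)) * (τ : ℂ) ^ (ν - 1))

/-- The function `2 y^{(α+β)/2} K_{(α-β)/2}(2πy)`. -/
def kerK (α β : ℂ) (y : ℝ) : ℂ :=
  (y : ℂ) ^ α * ((Real.pi : ℂ) ^ ((α - β) / 2) *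
    ∫ τ in Set.Ioi (0 : ℝ), kerInt ((α - β) / 2) (Real.pi ^ 2 * y ^ 2) τ)

lemma norm_kerInt (ν : ℂ) (x : ℝ) {τ : ℝ} (hτ : 0 < τ) :
    ‖kerInt ν x τ‖ = Real.exp (-(x * τ)) * (Real.exp (-τ⁻¹) * τ ^ (ν.re - 1)) := by
  simp only [kerInt, norm_mul]
  rw [norm_cpow_eq_rpow_re_of_pos hτ, ← ofReal_neg, ← ofReal_neg, norm_exp_ofReal,
    norm_exp_ofReal]
  simp

lemma kerInt_ofReal (ν : ℝ) (x : ℝ) {τ : ℝ} (hτ : 0 < τ) :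
    kerInt (ν : ℂ) x τ = ((Real.exp (-(x * τ)) * (Real.exp (-τ⁻¹) * τ ^ (ν - 1)) : ℝ) : ℂ) := by
  simp only [kerInt]
  push_cast
  rw [ofReal_cpow hτ.le]
  push_cast
  rfl

lemma measurable_kerInt : Measurable fun q : ℂ × ℝ × ℝ => kerInt q.1 q.2.1 q.2.2 := by
  simp only [kerInt]
  fun_prop

lemma exp_neg_inv_le (N : ℕ) {τ : ℝ} (hτ : 0 < τ) :
    Real.exp (-τ⁻¹) ≤ N.factorial * τ ^ (N : ℝ) := by
  have h := Real.pow_div_factorial_le_exp τ⁻¹ (by positivity) N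
  rw [Real.exp_neg, Real.rpow_natCast]
  rw [inv_pow] at h
  have h0 : (0 : ℝ) < (τ ^ N)⁻¹ / N.factorial := by positivity
  calc (Real.exp τ⁻¹)⁻¹ ≤ ((τ ^ N)⁻¹ / N.factorial)⁻¹ := by gcongr
    _ = _ := by rw [inv_div, div_inv_eq_mul]

lemma integrableOn_kerInt (ν : ℂ) {x : ℝ} (hx : 0 < x) :
    IntegrableOn (kerInt ν x) (Set.Ioi 0) := by
  obtain ⟨N, hN⟩ := exists_nat_gt (-ν.re)
  have h1 : IntegrableOn (fun τ : ℝ => τ ^ (ν.re + N - 1) * Real.exp (-x * τ)) (Set.Ioi 0) := by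
    have := integrableOn_rpow_mul_exp_neg_mul_rpow (s := ν.re + N - 1) (p := 1) (b := x)
      (by linarith) one_pos hx
    simpa using this
  refine (h1.const_mul (N.factorial : ℝ)).mono' ?_ ?_
  · exact (measurable_kerInt.comp
      (by fun_prop : Measurable fun τ : ℝ => (ν, x, τ))).aestronglyMeasurable
  · refine (ae_restrict_mem measurableSet_Ioi).mono fun τ hτ => ?_
    have hτ : 0 < τ := hτ
    rw [norm_kerInt ν x hτ]
    have h2 : τ ^ (ν.re + N - 1) = τ ^ (N : ℝ) * τ ^ (ν.re - 1) := by
      rw [← Real.rpow_add hτ]; ring_nf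
    have h3 := exp_neg_inv_le N hτ
    rw [h2]
    calc _ ≤ Real.exp (-(x * τ)) * ((N.factorial * τ ^ (N : ℝ)) * τ ^ (ν.re - 1)) := by gcongr
      _ = _ := by rw [neg_mul]; ring

lemma hasMellin_integral_kerInt {ν u : ℂ} (hu : 0 < u.re) (huν : 0 < (u - ν).re) :
    HasMellin (fun x : ℝ => ∫ τ in Set.Ioi (0 : ℝ), kerInt ν x τ) u
      (Complex.Gamma u * Complex.Gamma (u - ν)) := by
  have hf := hasMellin_exp_neg hu
  have hg0 := hasMellin_exp_neg huν
  have hg1 := mellin_comp_inv (fun x : ℝ => cexp (-(x : ℂ))) (ν - u)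
  have hg2 : MellinConvergent (fun x : ℝ => cexp (-((x⁻¹ : ℝ) : ℂ))) (ν - u) := by
    have := (MellinConvergent.comp_rpow (f := fun x : ℝ => cexp (-(x : ℂ))) (s := ν - u)
      (a := -1) (by norm_num)).2 (by
        rw [show (ν - u) / ((-1 : ℝ) : ℂ) = u - ν by push_cast; ring]
        exact hg0.1)
    simpa [Real.rpow_neg_one] using this
  have h := hasMellin_convolution (f := fun x : ℝ => cexp (-(x : ℂ)))
    (g := fun x : ℝ => cexp (-((x⁻¹ : ℝ) : ℂ))) (by fun_prop) (by fun_prop) hf.1 hg2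
  rw [hf.2, hg1, neg_sub, hg0.2] at h
  exact h

lemma kerK_hasMellin {α β s : ℂ} (h1 : 0 < (s + α).re) (h2 : 0 < (s + β).re) :
    HasMellin (kerK α β) s (1 / 2 * (GammaR (s + α) * GammaR (s + β))) := by
  have e1 : (s + α) / 2 - (α - β) / 2 = (s + β) / 2 := by ring
  have hpi : (Real.pi : ℂ) ≠ 0 := ofReal_ne_zero.mpr Real.pi_ne_zero
  have h := hasMellin_integral_kerInt (ν := (α - β) / 2) (u := (s + α) / 2)
    (by simp at h1 ⊢; linarith) (by rw [e1]; simp at h2 ⊢; linarith)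
  rw [e1] at h
  set H : ℝ → ℂ := fun x : ℝ => ∫ τ in Set.Ioi (0 : ℝ), kerInt ((α - β) / 2) x τ with hH
  have hp2 : (0 : ℝ) < Real.pi ^ 2 := by positivity
  have hA : MellinConvergent (fun x => H (Real.pi ^ 2 * x)) ((s + α) / 2) :=
    (MellinConvergent.comp_mul_left hp2).2 h.1
  have hA' := mellin_comp_mul_left H ((s + α) / 2) hp2
  rw [h.2] at hA'
  have hB : MellinConvergent (fun y : ℝ => H (Real.pi ^ 2 * y ^ (2 : ℝ))) (s + α) :=
    (MellinConvergent.comp_rpow (f := fun x => H (Real.pi ^ 2 * x)) (a := 2) (by norm_num)).2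
      (by simpa using hA)
  have hB' := mellin_comp_rpow (fun x => H (Real.pi ^ 2 * x)) (s + α) 2
  simp only [ofReal_ofNat] at hB'
  rw [hA'] at hB'
  have hfun : kerK α β = fun y : ℝ => (y : ℂ) ^ α • ((Real.pi : ℂ) ^ ((α - β) / 2) •
      H (Real.pi ^ 2 * y ^ (2 : ℝ))) := by
    funext y
    simp only [kerK, smul_eq_mul, hH, Real.rpow_two]
  rw [hfun]
  refine ⟨MellinConvergent.cpow_smul.2 (hB.const_smul _), ?_⟩
  rw [mellin_cpow_smul, mellin_const_smul, hB']
  simp only [GammaR, smul_eq_mul, real_smul]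
  have e2 : ((Real.pi ^ 2 : ℝ) : ℂ) ^ (-((s + α) / 2)) = (Real.pi : ℂ) ^ (-(s + α)) := by
    rw [pow_two, ofReal_mul, mul_cpow_ofReal_nonneg Real.pi_pos.le Real.pi_pos.le,
      ← cpow_add _ _ hpi]
    congr 1; ring
  have e3 : (Real.pi : ℂ) ^ ((α - β) / 2) * (Real.pi : ℂ) ^ (-(s + α)) =
      (Real.pi : ℂ) ^ (-(s + α) / 2) * (Real.pi : ℂ) ^ (-(s + β) / 2) := by
    rw [← cpow_add _ _ hpi, ← cpow_add _ _ hpi]; congr 1; ring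
  rw [e2, abs_of_pos two_pos]
  push_cast
  linear_combination (1 / 2 * Complex.Gamma ((s + α) / 2) * Complex.Gamma ((s + β) / 2)) * e3

lemma norm_kerK_le (α β : ℂ) {y : ℝ} (hy : 0 < y) :
    ‖kerK α β y‖ ≤ ‖kerK (α.re : ℂ) (β.re : ℂ) y‖ := by
  simp only [kerK, norm_mul]
  rw [norm_cpow_eq_rpow_re_of_pos hy, norm_cpow_eq_rpow_re_of_pos hy,
    norm_cpow_eq_rpow_re_of_pos Real.pi_pos, norm_cpow_eq_rpow_re_of_pos Real.pi_pos]
  have e : ((α.re : ℂ) - β.re) / 2 = (((α.re - β.re) / 2 : ℝ) : ℂ) := by push_cast; ring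
  have e' : ((α - β) / 2).re = (α.re - β.re) / 2 := by simp
  rw [e, ofReal_re, ofReal_re, e']
  gcongr
  refine (norm_integral_le_integral_norm _).trans ?_
  rw [setIntegral_congr_fun measurableSet_Ioi (fun τ hτ => norm_kerInt _ _ hτ),
    setIntegral_congr_fun measurableSet_Ioi (fun τ hτ => kerInt_ofReal _ _ hτ),
    integral_complex_ofReal, norm_real, e']
  exact le_abs_self _

lemma continuousAt_kerK (α β : ℂ) {y : ℝ} (hy : 0 < y) : ContinuousAt (kerK α β) y := by
  have hH : ContinuousAt (fun x : ℝ => ∫ τ in Set.Ioi (0 : ℝ), kerInt ((α - β) / 2) x τ)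
      (Real.pi ^ 2 * y ^ 2) := by
    have hx : 0 < Real.pi ^ 2 * y ^ 2 := by positivity
    refine continuousAt_of_dominated
      (bound := fun τ => ‖kerInt ((α - β) / 2) (Real.pi ^ 2 * y ^ 2 / 2) τ‖) ?_ ?_
      (integrableOn_kerInt _ (by positivity)).norm ?_
    · exact .of_forall fun x => (measurable_kerInt.comp
        (by fun_prop : Measurable fun τ : ℝ => ((α - β) / 2, x, τ))).aestronglyMeasurable
    · filter_upwards [lt_mem_nhds (half_lt_self hx)] with x hx'
      refine (ae_restrict_mem measurableSet_Ioi).mono fun τ hτ => ?_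
      have hτ : 0 < τ := hτ
      rw [norm_kerInt _ _ hτ, norm_kerInt _ _ hτ]
      gcongr
    · refine .of_forall fun τ => ?_
      simp only [kerInt]
      fun_prop
  have h1 : ContinuousAt (fun y : ℝ => (y : ℂ) ^ α) y :=
    continuous_ofReal.continuousAt.cpow continuousAt_const (by simp [slitPlane, hy])
  have h2 : ContinuousAt (fun y : ℝ => Real.pi ^ 2 * y ^ 2) y := by fun_prop
  exact h1.mul (continuousAt_const.mul
    (ContinuousAt.comp (f := fun y : ℝ => Real.pi ^ 2 * y ^ 2) hH h2))

lemma measurable_kerK : Measurable fun q : ℂ × ℂ × ℝ => kerK q.1 q.2.1 q.2.2 := by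
  simp only [kerK]
  have h : Measurable fun q : ℂ × ℂ × ℝ => ∫ τ in Set.Ioi (0 : ℝ),
      kerInt ((q.1 - q.2.1) / 2) (Real.pi ^ 2 * q.2.2 ^ 2) τ := by
    refine StronglyMeasurable.measurable (StronglyMeasurable.integral_prod_right
      (f := fun (q : ℂ × ℂ × ℝ) (τ : ℝ) =>
        kerInt ((q.1 - q.2.1) / 2) (Real.pi ^ 2 * q.2.2 ^ 2) τ) ?_)
    refine Measurable.stronglyMeasurable ?_
    exact measurable_kerInt.comp (by fun_prop : Measurable fun p : (ℂ × ℂ × ℝ) × ℝ =>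
      ((p.1.1 - p.1.2.1) / 2, Real.pi ^ 2 * p.1.2.2 ^ 2, p.2))
  fun_prop

lemma integrable_GammaR_mul_GammaR_vertical {α β : ℂ} (h1 : 0 < α.re) (h2 : 0 < β.re) :
    Integrable fun t : ℝ => GammaR (α + t * I) * GammaR (β + t * I) := by
  have h := (integrable_GammaR_vertical h1).bdd_mul
    (f := fun t : ℝ => GammaR (β + t * I)) (c := ‖GammaR (β.re : ℂ)‖)
    (measurable_GammaR.comp (by fun_prop)).aestronglyMeasurable
    (.of_forall fun t => by
      simpa using norm_GammaR_le (s := β + t * I) (by simpa using h2))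
  exact h.congr (.of_forall fun t => mul_comm _ _)

lemma kerK_mellin_inversion {α β : ℂ} {c y : ℝ} (h1 : 0 < (c + α).re) (h2 : 0 < (c + β).re)
    (hy : 0 < y) :
    ∫ t : ℝ, 1 / 2 * (GammaR (c + t * I + α) * GammaR (c + t * I + β)) *
      (y : ℂ) ^ (-(c + t * I)) = 2 * Real.pi * kerK α β y := by
  have hM : ∀ t : ℝ, HasMellin (kerK α β) (c + t * I)
      (1 / 2 * (GammaR (c + t * I + α) * GammaR (c + t * I + β))) := fun t =>
    kerK_hasMellin (by simpa using h1) (by simpa using h2)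
  have hV : VerticalIntegrable (mellin (kerK α β)) c := by
    refine ((integrable_GammaR_mul_GammaR_vertical h1 h2).const_mul (1 / 2)).congr
      (.of_forall fun t => ?_)
    simp only
    rw [(hM t).2]
    ring_nf
  have h := mellinInv_mellin_eq c (kerK α β) hy (by simpa using (hM 0).1) hV
    (continuousAt_kerK _ _ hy)
  rw [← h, mellinInv, ← Complex.coe_smul, smul_eq_mul, ← mul_assoc]
  have : (2 * (Real.pi : ℂ)) * ((1 / (2 * Real.pi) : ℝ) : ℂ) = 1 := by
    push_cast
    field_simp [Real.pi_ne_zero]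
  rw [this, one_mul]
  congr 1 with t
  rw [(hM t).2, smul_eq_mul, mul_comm]

section Fubini

variable {T : Type*} [MeasurableSpace T] {μ : Measure T} {m : ℕ}
  {ν : Fin m → Measure ℝ} [∀ j, SigmaFinite (ν j)] {F : T → ℂ} {f : Fin m → T → ℝ → ℂ}
  {C : Fin m → ℝ}

lemma integrable_mul_prod (hF : Integrable F μ)
    (hfm : ∀ j, Measurable fun q : T × ℝ => f j q.1 q.2)
    (hfi : ∀ j t, Integrable (f j t) (ν j)) (hC : ∀ j t, ∫ x, ‖f j t x‖ ∂ν j ≤ C j) :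
    Integrable (fun q : T × (Fin m → ℝ) => F q.1 * ∏ j, f j q.1 (q.2 j))
      (μ.prod (Measure.pi ν)) := by
  have hm : AEStronglyMeasurable (fun q : T × (Fin m → ℝ) => F q.1 * ∏ j, f j q.1 (q.2 j))
      (μ.prod (Measure.pi ν)) := by
    refine (hF.aestronglyMeasurable.comp_fst).mul (Measurable.aestronglyMeasurable ?_)
    refine Finset.measurable_fun_prod _ fun j _ => ?_
    exact (hfm j).comp (by fun_prop : Measurable fun q : T × (Fin m → ℝ) => (q.1, q.2 j))
  refine (integrable_prod_iff hm).2 ⟨.of_forall fun t => ?_, ?_⟩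
  · exact (Integrable.fintype_prod fun j => hfi j t).const_mul (F t)
  · refine (hF.norm.mul_const (∏ j, C j)).mono' hm.norm.integral_prod_right' ?_
    refine .of_forall fun t => ?_
    rw [Real.norm_of_nonneg (integral_nonneg fun _ => norm_nonneg _)]
    simp only [norm_mul, norm_prod]
    rw [integral_const_mul, integral_fintype_prod_eq_prod (fun j x => ‖f j t x‖)]
    exact mul_le_mul_of_nonneg_left (Finset.prod_le_prod
      (fun j _ => integral_nonneg fun x => norm_nonneg (f j t x)) fun j _ => hC j t)
      (norm_nonneg _)

lemma integral_integral_mul_prod [SFinite μ] (hF : Integrable F μ)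
    (hfm : ∀ j, Measurable fun q : T × ℝ => f j q.1 q.2)
    (hfi : ∀ j t, Integrable (f j t) (ν j)) (hC : ∀ j t, ∫ x, ‖f j t x‖ ∂ν j ≤ C j) :
    ∫ x, ∫ t, F t * ∏ j, f j t (x j) ∂μ ∂Measure.pi ν = ∫ t, F t * ∏ j, ∫ x, f j t x ∂ν j ∂μ := by
  rw [← integral_integral_swap (integrable_mul_prod hF hfm hfi hC)]
  congr 1 with t
  rw [integral_const_mul, integral_fintype_prod_eq_prod (fun j x => f j t x)]

lemma integrable_integral_mul_prod [SFinite μ] (hF : Integrable F μ)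
    (hfm : ∀ j, Measurable fun q : T × ℝ => f j q.1 q.2)
    (hfi : ∀ j t, Integrable (f j t) (ν j)) (hC : ∀ j t, ∫ x, ‖f j t x‖ ∂ν j ≤ C j) :
    Integrable (fun x : Fin m → ℝ => ∫ t, F t * ∏ j, f j t (x j) ∂μ) (Measure.pi ν) :=
  (integrable_mul_prod hF hfm hfi hC).integral_prod_right

end Fubini

lemma volume_restrict_posSet (k : ℕ) : (volume : Measure (Fin k → ℝ)).restrict (posSet k) =
    Measure.pi fun _ => (volume : Measure ℝ).restrict (Set.Ioi 0) := by
  rw [← Measure.restrict_pi_pi, volume_pi]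
  congr 1
  ext t
  simp [posSet]

lemma extR_apply {k : ℕ} (t : Fin k → ℝ) (j : Fin k) : extR t j = t j := by simp [extR]

lemma extR0_apply {k : ℕ} (t : Fin k → ℝ) (j : Fin k) : extR0 t j = t j := by simp [extR0]

lemma measurable_extR0 (k i : ℕ) : Measurable fun t : Fin k → ℝ => extR0 t i := by
  unfold extR0
  by_cases h : i < k
  · simpa [h] using measurable_pi_apply _
  · simp [h]

lemma integral_norm_GammaR_mul_GammaR_le {α β : ℂ} (h1 : 0 < α.re) (h2 : 0 < β.re) :
    ∫ t : ℝ, ‖GammaR (α + t * I) * GammaR (β + t * I)‖ ≤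
      (∫ t : ℝ, ‖GammaR (α.re + t * I)‖) * ‖GammaR (β.re : ℂ)‖ := by
  have e : ∫ t : ℝ, ‖GammaR (α.re + t * I)‖ = ∫ t : ℝ, ‖GammaR (α + t * I)‖ := by
    rw [← integral_add_right_eq_self (fun t : ℝ => ‖GammaR (α.re + t * I)‖) α.im]
    congr 1 with t
    congr 2
    nth_rw 3 [← re_add_im α]
    push_cast; ring
  rw [e, ← integral_mul_const]
  refine integral_mono (integrable_GammaR_mul_GammaR_vertical h1 h2).norm
    ((integrable_GammaR_vertical h1).norm.mul_const _) fun t => ?_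
  simp only [norm_mul]
  gcongr
  simpa using norm_GammaR_le (s := β + t * I) (by simpa using h2)

/-- The point of the product of vertical lines with abscissas `c` and imaginary parts `t`. -/
def vline (c : ℕ → ℝ) {k : ℕ} (t : Fin k → ℝ) : ℕ → ℂ :=
  fun i => (c i : ℂ) + (extR0 t i : ℝ) * I

/-- The contour variables of `U_{k+1,ã}`, extended and shifted by multiples of `a_1/(k+1)`. -/
def shiftX (k : ℕ) (a z : ℕ → ℂ) (i : ℕ) : ℂ :=
  PextL (k + 1) (tildeA (k + 2) a) z i + i * (a 0 / (k + 1))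

lemma tildeA_eq (k : ℕ) (a : ℕ → ℂ) (j : ℕ) :
    tildeA (k + 2) a j = a (j + 1) + a 0 / (k + 1) := by
  simp only [tildeA]
  congr 2
  push_cast; ring

lemma sumA_tildeA (k : ℕ) (a : ℕ → ℂ) : sumA (k + 1) (tildeA (k + 2) a) = sumA (k + 2) a := by
  simp only [sumA, tildeA_eq]
  rw [Finset.sum_add_distrib, Finset.sum_range_succ' a (k + 1)]
  have : (k : ℂ) + 1 ≠ 0 := by exact_mod_cast k.succ_ne_zero
  simp only [Finset.sum_const, Finset.card_range, nsmul_eq_mul]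
  push_cast
  field_simp

lemma tildeA_re {k : ℕ} {a : ℕ → ℂ} (ha : ∀ j < k + 2, (a j).re = 0) :
    ∀ j < k + 1, (tildeA (k + 2) a j).re = 0 := by
  intro j hj
  have e : ((k : ℂ) + 1) = ((k + 1 : ℝ) : ℂ) := by push_cast; rfl
  rw [tildeA_eq, e, add_re, div_ofReal_re, ha _ (by omega), ha 0 (by omega)]
  simp

lemma sumA_re {n : ℕ} {a : ℕ → ℂ} (ha : ∀ j < n, (a j).re = 0) : (sumA n a).re = 0 := by
  rw [sumA, re_sum]
  exact Finset.sum_eq_zero fun j hj => ha j (Finset.mem_range.1 hj)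

lemma shiftX_zero (k : ℕ) (a z : ℕ → ℂ) : shiftX k a z 0 = 0 := by simp [shiftX, PextL]

lemma shiftX_succ {k i : ℕ} (a z : ℕ → ℂ) (hi : i < k) :
    shiftX k a z (i + 1) = z i + (i + 1) * (a 0 / (k + 1)) := by
  simp [shiftX, PextL, Nat.succ_le_iff.2 hi]

lemma shiftX_last (k : ℕ) (a z : ℕ → ℂ) : shiftX k a z (k + 1) = a 0 - sumA (k + 2) a := by
  have : (k : ℂ) + 1 ≠ 0 := by exact_mod_cast k.succ_ne_zero
  simp only [shiftX, PextL, sumA_tildeA]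
  simp
  field_simp
  ring

/-- The real parts of the extended contour variables. -/
def absc (k : ℕ) (c : ℕ → ℝ) (i : ℕ) : ℝ :=
  if i = 0 then 0 else if i ≤ k then c (i - 1) else 0

lemma shiftX_vline_re {k : ℕ} {a : ℕ → ℂ} (ha : ∀ j < k + 2, (a j).re = 0) (c : ℕ → ℝ)
    (t : Fin k → ℝ) (i : ℕ) : (shiftX k a (vline c t) i).re = absc k c i := by
  have e : ((k : ℂ) + 1) = ((k + 1 : ℝ) : ℂ) := by push_cast; rfl
  have e2 : ((i : ℂ) * (a 0 / (k + 1))).re = 0 := by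
    rw [e, ← ofReal_natCast, re_ofReal_mul, div_ofReal_re, ha 0 (by omega)]
    simp
  rw [shiftX, add_re, e2, add_zero]
  simp only [absc, PextL, sumA_tildeA, vline, Nat.add_sub_cancel]
  split_ifs <;> simp [sumA_re ha]

lemma measurable_vline (c : ℕ → ℝ) (k i : ℕ) :
    Measurable fun t : Fin k → ℝ => vline c t i := by
  simp only [vline]
  have := measurable_extR0 k i
  fun_prop

lemma measurable_shiftX_vline (k : ℕ) (a : ℕ → ℂ) (c : ℕ → ℝ) (i : ℕ) :
    Measurable fun t : Fin k → ℝ => shiftX k a (vline c t) i := by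
  simp only [shiftX, PextL]
  split_ifs
  · fun_prop
  · exact (measurable_vline c k _).add_const _
  · fun_prop

lemma cpow_eq_exp_log {x : ℝ} (hx : 0 < x) (w : ℂ) :
    (x : ℂ) ^ w = cexp (w * (Real.log x : ℂ)) := by
  rw [cpow_def_of_ne_zero (ofReal_ne_zero.mpr hx.ne'), ← ofReal_log hx.le, mul_comm]

lemma whittaker_exponent_sum (K : ℕ) (δ P : ℂ) (Y T Z : ℕ → ℂ) (hZ : Z 0 = 0) (m : ℕ) :
    (∑ j ∈ Finset.range m, -Z (j + 1) * (Y (j + 1) + (T (j + 1) - T j) / 2)) +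
      (∑ j ∈ Finset.range (m + 1),
        ((K + 1 - j) * δ * (P + Y j) + (K + 2) * δ / 2 * T j - T j)) =
    (∑ j ∈ Finset.range (m + 1), (((K + 1) * δ - (Z j + j * δ)) * Y j +
      ((K + 1) * δ - (Z j + j * δ) + (Z (j + 1) + (j + 1) * δ)) / 2 * P +
      (((K + 1) * δ - (Z j + j * δ) + (Z (j + 1) + (j + 1) * δ)) / 2 - 1) * T j)) -
    Z (m + 1) / 2 * T m + P * (δ * (m + 1) * (K - m) / 2 - Z (m + 1) / 2) := by
  induction m with
  | zero => simp [hZ]; ring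
  | succ m ih =>
    rw [Finset.sum_range_succ _ m, Finset.sum_range_succ _ (m + 1),
      Finset.sum_range_succ _ (m + 1)]
    push_cast at ih ⊢
    linear_combination ih

/-- Regrouping the integrand in the recursive definition of the Whittaker function. -/
lemma whittaker_integrand_eq (k : ℕ) (a₀ S : ℂ) (Z : ℕ → ℂ) (y τ : ℕ → ℝ) (hZ : Z 0 = 0)
    (hZk : Z (k + 1) = -S) (hy : ∀ j < k + 1, 0 < y j) (hτ : ∀ j < k + 1, 0 < τ j) :
    (∏ j ∈ Finset.range k, ((y (j + 1) * Real.sqrt (τ (j + 1) / τ j) : ℝ) : ℂ) ^ (-Z (j + 1))) *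
      (∏ j ∈ Finset.range (k + 1),
        cexp (((-(Real.pi * y j) ^ 2 * τ j - 1 / τ j : ℝ) : ℂ)) *
          ((Real.pi * y j : ℝ) : ℂ) ^ ((((k + 1 - j : ℕ) : ℂ) * a₀) / ((k + 1 : ℕ) : ℂ)) *
          ((τ j : ℝ) : ℂ) ^ ((((k + 2 : ℕ) : ℂ) * a₀) / (2 * ((k + 1 : ℕ) : ℂ)))) *
      ((Real.pi * τ k : ℝ) : ℂ) ^ (-S / 2) *
      (∏ j ∈ Finset.range (k + 1), ((τ j : ℝ) : ℂ))⁻¹ =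
    ∏ j ∈ Finset.range (k + 1),
      (y j : ℂ) ^ (a₀ - (Z j + j * (a₀ / (k + 1)))) *
        ((Real.pi : ℂ) ^ ((a₀ - (Z j + j * (a₀ / (k + 1))) -
            -(Z (j + 1) + ((j + 1 : ℕ) : ℂ) * (a₀ / (k + 1)))) / 2) *
          kerInt ((a₀ - (Z j + j * (a₀ / (k + 1))) -
            -(Z (j + 1) + ((j + 1 : ℕ) : ℂ) * (a₀ / (k + 1)))) / 2)
            (Real.pi ^ 2 * y j ^ 2) (τ j)) := by
  have hk : (k : ℂ) + 1 ≠ 0 := by exact_mod_cast k.succ_ne_zero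
  set δ := a₀ / ((k : ℂ) + 1) with hδ
  have ha₀ : a₀ = (k + 1) * δ := by rw [hδ]; field_simp
  have hπ := Real.pi_pos
  have h1 : ∏ j ∈ Finset.range k,
      ((y (j + 1) * Real.sqrt (τ (j + 1) / τ j) : ℝ) : ℂ) ^ (-Z (j + 1)) =
      cexp (∑ j ∈ Finset.range k, -Z (j + 1) * ((Real.log (y (j + 1)) : ℂ) +
        ((Real.log (τ (j + 1)) : ℂ) - (Real.log (τ j) : ℂ)) / 2)) := by
    rw [Complex.exp_sum]
    refine Finset.prod_congr rfl fun j hj => ?_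
    have hj := Finset.mem_range.1 hj
    have p1 := hy (j + 1) (by omega)
    have p2 := hτ (j + 1) (by omega)
    have p3 := hτ j (by omega)
    rw [cpow_eq_exp_log (by positivity), Real.log_mul (by positivity) (by positivity),
      Real.log_sqrt (by positivity), Real.log_div (by positivity) (by positivity)]
    push_cast
    rfl
  have h2 : (∏ j ∈ Finset.range (k + 1),
        cexp (((-(Real.pi * y j) ^ 2 * τ j - 1 / τ j : ℝ) : ℂ)) *
          ((Real.pi * y j : ℝ) : ℂ) ^ ((((k + 1 - j : ℕ) : ℂ) * a₀) / ((k + 1 : ℕ) : ℂ)) *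
          ((τ j : ℝ) : ℂ) ^ ((((k + 2 : ℕ) : ℂ) * a₀) / (2 * ((k + 1 : ℕ) : ℂ)))) *
      (∏ j ∈ Finset.range (k + 1), ((τ j : ℝ) : ℂ))⁻¹ =
      cexp (∑ j ∈ Finset.range (k + 1), ((-(Real.pi * y j) ^ 2 * τ j - 1 / τ j : ℝ) : ℂ)) *
      cexp (∑ j ∈ Finset.range (k + 1), (((k : ℂ) + 1 - j) * δ * ((Real.log Real.pi : ℂ) +
        (Real.log (y j) : ℂ)) + (k + 2) * δ / 2 * (Real.log (τ j) : ℂ) -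
        (Real.log (τ j) : ℂ))) := by
    rw [Complex.exp_sum, Complex.exp_sum, ← Finset.prod_inv_distrib, ← Finset.prod_mul_distrib,
      ← Finset.prod_mul_distrib]
    refine Finset.prod_congr rfl fun j hj => ?_
    have hj := Finset.mem_range.1 hj
    have p1 := hy j hj
    have p2 := hτ j hj
    have e : ((τ j : ℝ) : ℂ)⁻¹ = cexp (-(Real.log (τ j) : ℂ)) := by
      rw [← cpow_neg_one, cpow_eq_exp_log p2, neg_one_mul]
    rw [e, cpow_eq_exp_log p2, cpow_eq_exp_log (by positivity),
      Real.log_mul (by positivity) (by positivity), ← Complex.exp_add, ← Complex.exp_add,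
      ← Complex.exp_add, ← Complex.exp_add, ha₀, Nat.cast_sub (by omega)]
    congr 1
    push_cast
    field_simp
    ring
  have h3 : ((Real.pi * τ k : ℝ) : ℂ) ^ (-S / 2) =
      cexp (-S / 2 * ((Real.log Real.pi : ℂ) + (Real.log (τ k) : ℂ))) := by
    have p2 := hτ k (by omega)
    rw [cpow_eq_exp_log (by positivity), Real.log_mul (by positivity) (by positivity)]
    push_cast
    rfl
  rw [h1, mul_right_comm _ _ ((∏ j ∈ Finset.range (k + 1), ((τ j : ℝ) : ℂ))⁻¹),
    mul_assoc (cexp _) _ ((∏ j ∈ Finset.range (k + 1), ((τ j : ℝ) : ℂ))⁻¹), h2, h3]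
  rw [mul_left_comm, ← Complex.exp_add, mul_assoc, ← Complex.exp_add, 
    whittaker_exponent_sum k δ (Real.log Real.pi : ℂ) (fun j => (Real.log (y j) : ℂ))
      (fun j => (Real.log (τ j) : ℂ)) Z hZ k, hZk]
  have h4 : ∀ X : ℂ, X - -S / 2 * (Real.log (τ k) : ℂ) + (Real.log Real.pi : ℂ) *
      (δ * (k + 1) * (k - k) / 2 - -S / 2) +
      -S / 2 * ((Real.log Real.pi : ℂ) + (Real.log (τ k) : ℂ)) = X := by intro X; ring
  rw [h4, Complex.exp_sum, Complex.exp_sum, ← Finset.prod_mul_distrib]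
  refine Finset.prod_congr rfl fun j hj => ?_
  have hj := Finset.mem_range.1 hj
  have p1 := hy j hj
  have p2 := hτ j hj
  rw [kerInt, cpow_eq_exp_log p1, cpow_eq_exp_log p2, cpow_eq_exp_log hπ, ← Complex.exp_add,
    ← Complex.exp_add, ← Complex.exp_add, ← Complex.exp_add, ← Complex.exp_add, ha₀]
  congr 1
  push_cast
  ring

lemma integral_fin_zero (f : (Fin 0 → ℝ) → ℂ) : ∫ t, f t = f default := by
  rw [Measure.volume_pi_eq_dirac default, integral_dirac]

lemma Ufun_one (a s : ℕ → ℂ) : Ufun 1 a s = 1 := by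
  have : posSet (1 - 1) = Set.univ := Set.eq_univ_of_forall fun t j => j.elim0
  rw [Ufun, this, setIntegral_univ, integral_fin_zero]
  simp [WhittAr]

lemma WhittAr_two_eq_kerK (a : ℕ → ℂ) (y : ℕ → ℝ) (hy : 0 < y 0) :
    WhittAr 2 a y = kerK (a 0) (a 1) (y 0) := by
  have hb : 0 < Real.pi * y 0 := by positivity
  set ν := (a 0 - a 1) / 2 with hν
  set g : ℝ → ℂ := fun t => cexp (-(((2 * Real.pi * y 0 : ℝ) : ℂ) / 2) * ((t : ℂ) + 1 / (t : ℂ))) *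
    (t : ℂ) ^ ν / (t : ℂ) with hg
  have h := integral_comp_mul_left_Ioi g 0 hb
  rw [mul_zero] at h
  have h1 : ∀ τ ∈ Set.Ioi (0 : ℝ), kerInt ν (Real.pi ^ 2 * y 0 ^ 2) τ =
      ((Real.pi * y 0 : ℝ) : ℂ) ^ (1 - ν) * g (Real.pi * y 0 * τ) := by
    intro τ hτ
    have hτ : 0 < τ := hτ
    have e : cexp (-((Real.pi ^ 2 * y 0 ^ 2 * τ : ℝ) : ℂ)) * cexp (-((τ⁻¹ : ℝ) : ℂ)) =
        cexp (-(((2 * Real.pi * y 0 : ℝ) : ℂ) / 2) * (((Real.pi * y 0 * τ : ℝ) : ℂ) +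
          1 / ((Real.pi * y 0 * τ : ℝ) : ℂ))) := by
      rw [← Complex.exp_add]
      congr 1
      have : (Real.pi : ℂ) ≠ 0 := ofReal_ne_zero.mpr Real.pi_ne_zero
      have : (y 0 : ℂ) ≠ 0 := ofReal_ne_zero.mpr hy.ne'
      have : (τ : ℂ) ≠ 0 := ofReal_ne_zero.mpr hτ.ne'
      push_cast
      field_simp
      ring
    simp only [hg]
    rw [← e, kerInt, ofReal_mul (Real.pi * y 0) τ, mul_cpow_ofReal_nonneg hb.le hτ.le,
      cpow_sub _ _ (ofReal_ne_zero.mpr hb.ne'), cpow_sub _ _ (ofReal_ne_zero.mpr hτ.ne'),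
      cpow_one, cpow_one]
    have h2 : ((Real.pi * y 0 : ℝ) : ℂ) ^ ν ≠ 0 := by
      simp [cpow_eq_zero_iff, Real.pi_ne_zero, hy.ne']
    have : ((Real.pi * y 0 : ℝ) : ℂ) ≠ 0 := ofReal_ne_zero.mpr hb.ne'
    have : (τ : ℂ) ≠ 0 := ofReal_ne_zero.mpr hτ.ne'
    field_simp
  have he : ((Real.pi * y 0 : ℝ) : ℂ) ^ ν = (Real.pi : ℂ) ^ ν * (y 0 : ℂ) ^ ν := by
    rw [ofReal_mul, mul_cpow_ofReal_nonneg Real.pi_pos.le hy.le]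
  rw [WhittAr, kerK, setIntegral_congr_fun measurableSet_Ioi h1, integral_const_mul, h, BesselK,
    real_smul, ofReal_inv, cpow_sub _ _ (ofReal_ne_zero.mpr hb.ne'), cpow_one, he]
  have e1 : (y 0 : ℂ) ^ a 0 = (y 0 : ℂ) ^ ((a 0 + a 1) / 2) * (y 0 : ℂ) ^ ν := by
    rw [← cpow_add _ _ (ofReal_ne_zero.mpr hy.ne')]; congr 1; rw [hν]; ring
  have h2 : (y 0 : ℂ) ^ ν ≠ 0 := by simp [cpow_eq_zero_iff, hy.ne']
  have h3 : (Real.pi : ℂ) ^ ν ≠ 0 := by simp [cpow_eq_zero_iff, Real.pi_ne_zero]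
  have : ((Real.pi * y 0 : ℝ) : ℂ) ≠ 0 := ofReal_ne_zero.mpr hb.ne'
  have hint : ∫ t in Set.Ioi (0 : ℝ), cexp (-(((2 * Real.pi * y 0 : ℝ) : ℂ) / 2) *
      ((t : ℂ) + 1 / (t : ℂ))) * (t : ℂ) ^ ((a 0 - a 1) / 2) / (t : ℂ) =
      ∫ t in Set.Ioi (0 : ℝ), g t := rfl
  rw [e1, hint, ← hν]
  field_simp

lemma measurableSet_posSet (k : ℕ) : MeasurableSet (posSet k) := by
  have : posSet k = Set.univ.pi fun _ => Set.Ioi 0 := by ext t; simp [posSet]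
  rw [this]
  exact MeasurableSet.univ_pi fun _ => measurableSet_Ioi

lemma measurable_shiftX_vline_fst (k : ℕ) (a : ℕ → ℂ) (c : ℕ → ℝ) (i : ℕ) :
    Measurable fun q : (Fin k → ℝ) × ℝ => shiftX k a (vline c q.1) i :=
  (measurable_shiftX_vline k a c i).comp measurable_fst

section Step

variable {k : ℕ} {a : ℕ → ℂ} {c : ℕ → ℝ}

/-- The Whittaker function on `GL_{k+2}` as an integral over the contour variables of the
Mellin transform on `GL_{k+1}`. -/
lemma WhittAr_eq_integral_kerK (ha : ∀ j < k + 2, (a j).re = 0)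
    (hI : Integrable fun t : Fin k → ℝ => Ufun (k + 1) (tildeA (k + 2) a) (vline c t))
    (hA : ∀ y : ℕ → ℝ, (∀ j < k, 0 < y j) → WhittAr (k + 1) (tildeA (k + 2) a) y =
      ((2 * Real.pi) ^ k : ℂ)⁻¹ * ∫ t : Fin k → ℝ, Ufun (k + 1) (tildeA (k + 2) a) (vline c t) *
        ∏ j : Fin k, (y j : ℂ) ^ (-(vline c t j)))
    {y : ℕ → ℝ} (hy : ∀ j < k + 1, 0 < y j) :
    WhittAr (k + 2) a y = ((2 * Real.pi) ^ k : ℂ)⁻¹ * ∫ t : Fin k → ℝ,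
      Ufun (k + 1) (tildeA (k + 2) a) (vline c t) * ∏ j : Fin (k + 1),
        kerK (a 0 - shiftX k a (vline c t) j) (-shiftX k a (vline c t) (j + 1)) (y j) := by
  rcases k with _ | k
  · rw [WhittAr_two_eq_kerK a y (hy 0 (by omega)), integral_fin_zero, Ufun_one]
    have : ∀ z, shiftX 0 a z 1 = -a 1 := fun z => by
      simpa [sumA, Finset.sum_range_succ] using shiftX_last 0 a z
    simp [shiftX_zero, this]
  · have hmain : ∀ τ ∈ posSet (k + 2),
        WhittAr (k + 2) (tildeA (k + 3) a)
            (fun j => y (j + 1) * Real.sqrt (extR τ (j + 1) / extR τ j)) *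
          (∏ j ∈ Finset.range (k + 2),
            Complex.exp (((-(Real.pi * y j) ^ 2 * extR τ j - 1 / extR τ j : ℝ) : ℂ)) *
              ((Real.pi * y j : ℝ) : ℂ) ^ ((((k + 2 - j : ℕ) : ℂ) * a 0) / ((k + 2 : ℕ) : ℂ)) *
              ((extR τ j : ℝ) : ℂ) ^ ((((k + 3 : ℕ) : ℂ) * a 0) / (2 * ((k + 2 : ℕ) : ℂ)))) *
          ((Real.pi * extR τ (k + 1) : ℝ) : ℂ) ^ (-(sumA (k + 3) a) / 2) *
          (∏ j ∈ Finset.range (k + 2), ((extR τ j : ℝ) : ℂ))⁻¹ =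
        ((2 * Real.pi) ^ (k + 1) : ℂ)⁻¹ * ∫ t : Fin (k + 1) → ℝ,
          Ufun (k + 2) (tildeA (k + 3) a) (vline c t) * ∏ j : Fin (k + 2),
            ((y j : ℂ) ^ (a 0 - shiftX (k + 1) a (vline c t) j) *
              ((Real.pi : ℂ) ^ ((a 0 - shiftX (k + 1) a (vline c t) j -
                  -shiftX (k + 1) a (vline c t) (j + 1)) / 2) *
                kerInt ((a 0 - shiftX (k + 1) a (vline c t) j -
                  -shiftX (k + 1) a (vline c t) (j + 1)) / 2) (Real.pi ^ 2 * y j ^ 2) (τ j))) := by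
      intro τ hτ
      have hτ' : ∀ j < k + 2, 0 < extR τ j := fun j hj => by
        simpa [extR, hj] using hτ ⟨j, hj⟩
      rw [hA _ fun j hj => by
        have p1 := hy (j + 1) (by omega)
        have p2 := hτ' (j + 1) (by omega)
        have p3 := hτ' j (by omega)
        positivity, mul_assoc, mul_assoc, mul_assoc, ← integral_mul_const]
      congr 2 with t
      rw [mul_assoc]
      congr 1
      have h := whittaker_integrand_eq (k + 1) (a 0) (sumA (k + 3) a)
        (PextL (k + 2) (tildeA (k + 3) a) (vline c t)) y (extR τ) (by simp [PextL])
        (by simp [PextL, ← sumA_tildeA]) hy hτ'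
      rw [Finset.prod_range, Finset.prod_range (n := k + 1 + 1)
        (f := fun j => (y j : ℂ) ^ _ * _)] at h
      have e1 : ∀ j : Fin (k + 1), PextL (k + 2) (tildeA (k + 3) a) (vline c t) (j + 1) =
          vline c t j := fun j => by
        simp [PextL, Nat.lt_succ_iff.1 j.2]
      simp only [e1, extR_apply] at h
      rw [← mul_assoc, ← mul_assoc]
      exact h
    rw [WhittAr, setIntegral_congr_fun (measurableSet_posSet _) hmain, integral_const_mul,
      volume_restrict_posSet, integral_integral_mul_prod hI
        (f := fun (j : Fin (k + 2)) (t : Fin (k + 1) → ℝ) (τ : ℝ) =>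
          ((y j : ℂ) ^ (a 0 - shiftX (k + 1) a (vline c t) j) *
              ((Real.pi : ℂ) ^ ((a 0 - shiftX (k + 1) a (vline c t) j -
                  -shiftX (k + 1) a (vline c t) (j + 1)) / 2) *
                kerInt ((a 0 - shiftX (k + 1) a (vline c t) j -
                  -shiftX (k + 1) a (vline c t) (j + 1)) / 2) (Real.pi ^ 2 * y j ^ 2) τ)))
        (C := fun j => ∫ τ in Set.Ioi (0 : ℝ), ‖
          ((y j : ℂ) ^ (a 0 - shiftX (k + 1) a (vline c (default : Fin (k + 1) → ℝ)) j) *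
              ((Real.pi : ℂ) ^ ((a 0 - shiftX (k + 1) a (vline c (default : Fin (k + 1) → ℝ)) j -
                  -shiftX (k + 1) a (vline c (default : Fin (k + 1) → ℝ)) (j + 1)) / 2) *
                kerInt ((a 0 - shiftX (k + 1) a (vline c (default : Fin (k + 1) → ℝ)) j -
                  -shiftX (k + 1) a (vline c (default : Fin (k + 1) → ℝ)) (j + 1)) / 2)
                  (Real.pi ^ 2 * y j ^ 2) τ))‖)]
    · congr 2 with t
      congr 1
      refine Finset.prod_congr rfl fun j _ => ?_
      rw [integral_const_mul, integral_const_mul, kerK]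
    · intro j
      have h1 := measurable_shiftX_vline_fst (k + 1) a c j
      have h2 := measurable_shiftX_vline_fst (k + 1) a c (j + 1)
      have h3 : Measurable fun q : (Fin (k + 1) → ℝ) × ℝ =>
          kerInt ((a 0 - shiftX (k + 1) a (vline c q.1) j -
                  -shiftX (k + 1) a (vline c q.1) (j + 1)) / 2) (Real.pi ^ 2 * y j ^ 2) q.2 :=
        measurable_kerInt.comp (by fun_prop : Measurable fun q : (Fin (k + 1) → ℝ) × ℝ =>
          ((a 0 - shiftX (k + 1) a (vline c q.1) j -
                  -shiftX (k + 1) a (vline c q.1) (j + 1)) / 2, Real.pi ^ 2 * y j ^ 2, q.2))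
      fun_prop
    · intro j t
      have := hy j j.2
      exact ((integrableOn_kerInt _ (by positivity)).const_mul _).const_mul _
    · intro j t
      have := hy j j.2
      refine le_of_eq (setIntegral_congr_fun measurableSet_Ioi fun τ hτ => ?_)
      simp only [norm_mul]
      rw [norm_kerInt _ _ hτ, norm_kerInt _ _ hτ, norm_cpow_eq_rpow_re_of_pos this,
        norm_cpow_eq_rpow_re_of_pos this, norm_cpow_eq_rpow_re_of_pos Real.pi_pos,
        norm_cpow_eq_rpow_re_of_pos Real.pi_pos]
      simp only [sub_re, neg_re, div_ofNat_re, shiftX_vline_re ha]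

/-- The recursive formula for the Mellin transform of the Whittaker function. -/
lemma Ufun_eq_integral (ha : ∀ j < k + 2, (a j).re = 0)
    (hI : Integrable fun t : Fin k → ℝ => Ufun (k + 1) (tildeA (k + 2) a) (vline c t))
    (hA : ∀ y : ℕ → ℝ, (∀ j < k, 0 < y j) → WhittAr (k + 1) (tildeA (k + 2) a) y =
      ((2 * Real.pi) ^ k : ℂ)⁻¹ * ∫ t : Fin k → ℝ, Ufun (k + 1) (tildeA (k + 2) a) (vline c t) *
        ∏ j : Fin k, (y j : ℂ) ^ (-(vline c t j)))
    {s : ℕ → ℂ} (hs : ∀ j < k + 1, absc k c j < (s j).re)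
    (hs' : ∀ j < k + 1, absc k c (j + 1) < (s j).re) :
    Ufun (k + 2) a s = ((2 * Real.pi) ^ k : ℂ)⁻¹ * ∫ t : Fin k → ℝ,
      Ufun (k + 1) (tildeA (k + 2) a) (vline c t) * ∏ j : Fin (k + 1),
        (1 / 2 * (GammaR (s j + (a 0 - shiftX k a (vline c t) j)) *
          GammaR (s j + -shiftX k a (vline c t) (j + 1)))) := by
  have hre : ∀ (j : ℕ) (t : Fin k → ℝ), (a 0 - shiftX k a (vline c t) j).re = -absc k c j :=
    fun j t => by rw [sub_re, shiftX_vline_re ha, ha 0 (by omega), zero_sub]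
  have hre' : ∀ (j : ℕ) (t : Fin k → ℝ), (-shiftX k a (vline c t) j).re = -absc k c j :=
    fun j t => by rw [neg_re, shiftX_vline_re ha]
  have hM : ∀ (j : Fin (k + 1)) (t : Fin k → ℝ), HasMellin
      (kerK (a 0 - shiftX k a (vline c t) j) (-shiftX k a (vline c t) (j + 1))) (s j) _ :=
    fun j t => kerK_hasMellin (by rw [add_re, hre]; linarith [hs j j.2])
      (by rw [add_re, hre']; linarith [hs' j j.2])
  have hM' : ∀ j : Fin (k + 1), HasMellin
      (kerK ((-absc k c j : ℝ) : ℂ) ((-absc k c (j + 1) : ℝ) : ℂ)) (s j) _ :=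
    fun j => kerK_hasMellin (by rw [add_re, ofReal_re]; linarith [hs j j.2])
      (by rw [add_re, ofReal_re]; linarith [hs' j j.2])
  have hmain : ∀ y ∈ posSet (k + 1), WhittAr (k + 2) a (extR y) *
      ∏ j ∈ Finset.range (k + 1), ((extR y j : ℝ) : ℂ) ^ s j / ((extR y j : ℝ) : ℂ) =
      ((2 * Real.pi) ^ k : ℂ)⁻¹ * ∫ t : Fin k → ℝ,
      Ufun (k + 1) (tildeA (k + 2) a) (vline c t) * ∏ j : Fin (k + 1),
        ((y j : ℂ) ^ (s j - 1) • kerK (a 0 - shiftX k a (vline c t) j)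
          (-shiftX k a (vline c t) (j + 1)) (y j)) := by
    intro y hy
    have hy' : ∀ j < k + 1, 0 < extR y j := fun j hj => by simpa [extR, hj] using hy ⟨j, hj⟩
    rw [WhittAr_eq_integral_kerK ha hI hA hy', Finset.prod_range, mul_assoc, ← integral_mul_const]
    congr 2 with t
    rw [mul_assoc, ← Finset.prod_mul_distrib]
    congr 1
    refine Finset.prod_congr rfl fun j _ => ?_
    rw [extR_apply, cpow_sub _ _ (ofReal_ne_zero.mpr (hy j).ne'), cpow_one, smul_eq_mul, mul_comm]
  rw [Ufun, Nat.add_sub_cancel (k + 1) 1, setIntegral_congr_fun (measurableSet_posSet _) hmain,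
    integral_const_mul, volume_restrict_posSet, integral_integral_mul_prod hI
      (f := fun (j : Fin (k + 1)) (t : Fin k → ℝ) (y : ℝ) => (y : ℂ) ^ (s j - 1) •
        kerK (a 0 - shiftX k a (vline c t) j) (-shiftX k a (vline c t) (j + 1)) y)
      (C := fun j => ∫ y in Set.Ioi (0 : ℝ), ‖(y : ℂ) ^ (s j - 1) •
        kerK ((-absc k c j : ℝ) : ℂ) ((-absc k c (j + 1) : ℝ) : ℂ) y‖)]
  · congr 2 with t
    congr 1
    exact Finset.prod_congr rfl fun j _ => (hM j t).2
  · intro j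
    have h1 := measurable_shiftX_vline_fst k a c j
    have h2 := measurable_shiftX_vline_fst k a c (j + 1)
    have h3 : Measurable fun q : (Fin k → ℝ) × ℝ =>
        kerK (a 0 - shiftX k a (vline c q.1) j) (-shiftX k a (vline c q.1) (j + 1)) q.2 :=
      measurable_kerK.comp (by fun_prop : Measurable fun q : (Fin k → ℝ) × ℝ =>
        (a 0 - shiftX k a (vline c q.1) j, -shiftX k a (vline c q.1) (j + 1), q.2))
    fun_prop
  · exact fun j t => (hM j t).1
  · intro j t
    refine setIntegral_mono_on (hM j t).1.norm (hM' j).1.norm measurableSet_Ioi fun y hy => ?_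
    rw [norm_smul, norm_smul]
    gcongr
    have := norm_kerK_le (a 0 - shiftX k a (vline c t) j) (-shiftX k a (vline c t) (j + 1)) hy
    rwa [hre, hre'] at this

end Step

lemma absc_lt {k : ℕ} {d : ℕ → ℝ} {r : ℝ} (hr : 0 < r) {j : ℕ}
    (h : ∀ i, j = i + 1 → i < k → d i < r) : absc k d j < r := by
  unfold absc
  split_ifs with h0 h1
  · exact hr
  · exact h (j - 1) (by omega) (by omega)
  · exact hr

lemma norm_cpow_neg_vertical {y : ℝ} (hy : 0 < y) (c x : ℝ) :
    ‖(y : ℂ) ^ (-((c : ℂ) + x * I))‖ = y ^ (-c) := by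
  rw [norm_cpow_eq_rpow_re_of_pos hy]
  simp

lemma vline_apply (c : ℕ → ℝ) {k : ℕ} (t : Fin k → ℝ) (j : Fin k) :
    vline c t j = (c j : ℂ) + (t j : ℂ) * I := by rw [vline, extR0_apply]

/-- Integrability of the Mellin transform of the Whittaker function on products of vertical
lines, and Mellin inversion. -/
theorem integrable_Ufun_vline_and_inversion (n : ℕ) : ∀ a : ℕ → ℂ,
    (∀ j < n + 1, (a j).re = 0) → ∀ c : ℕ → ℝ, (∀ i < n, 0 < c i) →
    (Integrable fun t : Fin n → ℝ => Ufun (n + 1) a (vline c t)) ∧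
    ∀ y : ℕ → ℝ, (∀ j < n, 0 < y j) → WhittAr (n + 1) a y =
      ((2 * Real.pi) ^ n : ℂ)⁻¹ * ∫ t : Fin n → ℝ, Ufun (n + 1) a (vline c t) *
        ∏ j : Fin n, (y j : ℂ) ^ (-(vline c t j)) := by
  induction n with
  | zero =>
    intro a _ c _
    constructor
    · simp only [zero_add, Ufun_one]
      rw [Measure.volume_pi_eq_dirac default]
      exact integrable_dirac (by simp)
    · intro y _
      rw [integral_fin_zero]
      simp only [zero_add, Ufun_one]
      simp [WhittAr]
  | succ k ih =>
    intro a ha c hc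
    set d : ℕ → ℝ := fun i => min (c i) (c (i + 1)) / 2 with hd
    have hdpos : ∀ i < k, 0 < d i := fun i hi =>
      half_pos (lt_min (hc i (by omega)) (hc (i + 1) (by omega)))
    have hdc : ∀ i < k, d i < c i := fun i hi =>
      (half_lt_self (lt_min (hc i (by omega)) (hc (i + 1) (by omega)))).trans_le (min_le_left _ _)
    have hdc' : ∀ i < k, d i < c (i + 1) := fun i hi =>
      (half_lt_self (lt_min (hc i (by omega)) (hc (i + 1) (by omega)))).trans_le (min_le_right _ _)
    have h1 : ∀ j < k + 1, absc k d j < c j := fun j hj =>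
      absc_lt (hc j hj) fun i hi hik => by rw [hi]; exact hdc' i hik
    have h2 : ∀ j < k + 1, absc k d (j + 1) < c j := fun j hj =>
      absc_lt (hc j hj) fun i hi hik => by
        obtain rfl : j = i := by omega
        exact hdc j hik
    obtain ⟨hI, hA⟩ := ih (tildeA (k + 2) a) (tildeA_re ha) d hdpos
    have hre : ∀ (j : ℕ) (t : Fin k → ℝ), (c j + (a 0 - shiftX k a (vline d t) j)).re =
        c j - absc k d j :=
      fun j t => by rw [add_re, sub_re, shiftX_vline_re ha, ha 0 (by omega), ofReal_re]; ring
    have hre' : ∀ (j : ℕ) (t : Fin k → ℝ), (c j + -shiftX k a (vline d t) (j + 1)).re =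
        c j - absc k d (j + 1) :=
      fun j t => by rw [add_re, neg_re, shiftX_vline_re ha, ofReal_re]; ring
    have hB : ∀ x : Fin (k + 1) → ℝ, Ufun (k + 2) a (vline c x) = ((2 * Real.pi) ^ k : ℂ)⁻¹ *
        ∫ t : Fin k → ℝ, Ufun (k + 1) (tildeA (k + 2) a) (vline d t) * ∏ j : Fin (k + 1),
        (1 / 2 * (GammaR (c j + x j * I + (a 0 - shiftX k a (vline d t) j)) *
          GammaR (c j + x j * I + -shiftX k a (vline d t) (j + 1)))) := by
      intro x
      have := Ufun_eq_integral ha hI hA (s := vline c x)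
        (fun j hj => by simpa [vline] using h1 j hj) (fun j hj => by simpa [vline] using h2 j hj)
      simpa only [vline_apply] using this
    have hprod : ∀ (y : ℕ → ℝ) (x : Fin (k + 1) → ℝ), Ufun (k + 2) a (vline c x) *
        ∏ j : Fin (k + 1), (y j : ℂ) ^ (-(vline c x j)) = ((2 * Real.pi) ^ k : ℂ)⁻¹ *
        ∫ t : Fin k → ℝ, Ufun (k + 1) (tildeA (k + 2) a) (vline d t) * ∏ j : Fin (k + 1),
        (1 / 2 * (GammaR (c j + x j * I + (a 0 - shiftX k a (vline d t) j)) *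
          GammaR (c j + x j * I + -shiftX k a (vline d t) (j + 1))) *
            (y j : ℂ) ^ (-((c j : ℂ) + x j * I))) := by
      intro y x
      rw [hB, mul_assoc, ← integral_mul_const]
      simp only [vline_apply, mul_assoc, Finset.prod_mul_distrib]
    set f : (ℕ → ℝ) → Fin (k + 1) → (Fin k → ℝ) → ℝ → ℂ := fun y j t x =>
      1 / 2 * (GammaR (c j + x * I + (a 0 - shiftX k a (vline d t) j)) *
          GammaR (c j + x * I + -shiftX k a (vline d t) (j + 1))) *
            (y j : ℂ) ^ (-((c j : ℂ) + x * I)) with hf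
    have hfm : ∀ y j, Measurable fun q : (Fin k → ℝ) × ℝ => f y j q.1 q.2 := by
      intro y j
      have h1 := measurable_shiftX_vline_fst k a d j
      have h2 := measurable_shiftX_vline_fst k a d (j + 1)
      have h3 : Measurable fun q : (Fin k → ℝ) × ℝ =>
        GammaR (c j + q.2 * I + (a 0 - shiftX k a (vline d q.1) j)) :=
        measurable_GammaR.comp (by fun_prop)
      have h4 : Measurable fun q : (Fin k → ℝ) × ℝ =>
        GammaR (c j + q.2 * I + -shiftX k a (vline d q.1) (j + 1)) :=
        measurable_GammaR.comp (by fun_prop)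
      simp only [hf]
      fun_prop
    have hG : ∀ (j : Fin (k + 1)) (t : Fin k → ℝ), Integrable fun x : ℝ =>
        GammaR (c j + (a 0 - shiftX k a (vline d t) j) + x * I) *
          GammaR (c j + -shiftX k a (vline d t) (j + 1) + x * I) := fun j t =>
      integrable_GammaR_mul_GammaR_vertical
        (by rw [hre]; linarith [h1 j j.2]) (by rw [hre']; linarith [h2 j j.2])
    have hfG : ∀ (y : ℕ → ℝ), (∀ j < k + 1, 0 < y j) → ∀ (j : Fin (k + 1)) (t : Fin k → ℝ)
        (x : ℝ), ‖f y j t x‖ = ‖GammaR (c j + (a 0 - shiftX k a (vline d t) j) + x * I) *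
          GammaR (c j + -shiftX k a (vline d t) (j + 1) + x * I)‖ * (1 / 2 * y j ^ (-c j)) := by
      intro y hy j t x
      simp only [hf]
      rw [norm_mul, norm_cpow_neg_vertical (hy j j.2), norm_mul, add_right_comm (c j : ℂ),
        add_right_comm (c j : ℂ)]
      norm_num
      ring_nf
    have hfi : ∀ (y : ℕ → ℝ), (∀ j < k + 1, 0 < y j) → ∀ j t, Integrable (f y j t) := by
      intro y hy j t
      refine ((hG j t).norm.mul_const (1 / 2 * y j ^ (-c j))).mono' ?_
        (.of_forall fun x => (hfG y hy j t x).le)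
      exact ((hfm y j).comp (measurable_const.prodMk measurable_id)).aestronglyMeasurable
    have hC : ∀ (y : ℕ → ℝ), (∀ j < k + 1, 0 < y j) → ∀ j t, ∫ x, ‖f y j t x‖ ≤
        (∫ x : ℝ, ‖GammaR ((c j - absc k d j : ℝ) + x * I)‖) *
          ‖GammaR ((c j - absc k d (j + 1) : ℝ) : ℂ)‖ * (1 / 2 * y j ^ (-c j)) := by
      intro y hy j t
      simp only [hfG y hy]
      rw [integral_mul_const]
      have := hy j j.2
      gcongr
      have := integral_norm_GammaR_mul_GammaR_le
        (α := c j + (a 0 - shiftX k a (vline d t) j))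
        (β := c j + -shiftX k a (vline d t) (j + 1))
        (by rw [hre]; linarith [h1 j j.2]) (by rw [hre']; linarith [h2 j j.2])
      rwa [hre, hre'] at this
    constructor
    · have h := integrable_integral_mul_prod hI (hfm fun _ => 1) (hfi _ fun _ _ => one_pos)
        (hC _ fun _ _ => one_pos)
      rw [← volume_pi] at h
      refine (h.const_mul ((2 * Real.pi) ^ k : ℂ)⁻¹).congr (.of_forall fun x => ?_)
      exact (hprod (fun _ => 1) x).symm.trans (by simp)
    · intro y hy
      have h := integral_integral_mul_prod hI (hfm y) (hfi y hy) (hC y hy)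
      rw [← volume_pi] at h
      simp only [hprod]
      rw [integral_const_mul, h, WhittAr_eq_integral_kerK ha hI hA hy]
      have hin : ∀ (j : Fin (k + 1)) (t : Fin k → ℝ), ∫ x, f y j t x = 2 * Real.pi *
          kerK (a 0 - shiftX k a (vline d t) j) (-shiftX k a (vline d t) (j + 1)) (y j) := by
        intro j t
        exact kerK_mellin_inversion (by rw [hre]; linarith [h1 j j.2])
          (by rw [hre']; linarith [h2 j j.2]) (hy j j.2)
      simp only [hin, Finset.prod_mul_distrib, Finset.prod_const, Finset.card_univ,
        Fintype.card_fin]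
      simp only [mul_left_comm (Ufun _ _ _), integral_const_mul]
      have : (Real.pi : ℂ) ≠ 0 := ofReal_ne_zero.mpr Real.pi_ne_zero
      field_simp
      ring

lemma norm_GammaR_le_of_re_eq {z : ℂ} {r : ℝ} (hr : 0 < r) (h : z.re = r) :
    ‖GammaR z‖ ≤ ‖GammaR (r : ℂ)‖ := by
  subst h
  exact norm_GammaR_le hr

/-- Barnes' first lemma, applied in each of several variables under an integral sign. -/
lemma integral_integral_mul_prod_barnes {T : Type*} [MeasurableSpace T] {μ : Measure T} [SFinite μ]
    {m : ℕ} {F : T → ℂ} (hF : Integrable F μ) {α β γ δ : Fin m → T → ℂ}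
    {ra rb rc rd : Fin m → ℝ}
    (hα : ∀ j, Measurable (α j)) (hβ : ∀ j, Measurable (β j))
    (hγ : ∀ j, Measurable (γ j)) (hδ : ∀ j, Measurable (δ j))
    (hra : ∀ j, 0 < ra j) (hrb : ∀ j, 0 < rb j) (hrc : ∀ j, 0 < rc j) (hrd : ∀ j, 0 < rd j)
    (ea : ∀ j t, (α j t).re = ra j) (eb : ∀ j t, (β j t).re = rb j)
    (ec : ∀ j t, (γ j t).re = rc j) (ed : ∀ j t, (δ j t).re = rd j) :
    ∫ x : Fin m → ℝ, ∫ t, F t * ∏ j, (GammaR (α j t + x j * I) * GammaR (β j t + x j * I) *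
        GammaR (γ j t - x j * I) * GammaR (δ j t - x j * I)) ∂μ =
      (4 * Real.pi) ^ m * ∫ t, F t * ∏ j, (GammaR (α j t + γ j t) * GammaR (α j t + δ j t) *
        GammaR (β j t + γ j t) * GammaR (β j t + δ j t) /
        GammaR (α j t + β j t + γ j t + δ j t)) ∂μ := by
  set f : Fin m → T → ℝ → ℂ := fun j t x => GammaR (α j t + x * I) * GammaR (β j t + x * I) *
    GammaR (γ j t - x * I) * GammaR (δ j t - x * I) with hf
  have hfm : ∀ j, Measurable fun q : T × ℝ => f j q.1 q.2 := by
    intro j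
    have h1 : Measurable fun q : T × ℝ => GammaR (α j q.1 + q.2 * I) :=
      measurable_GammaR.comp (by fun_prop)
    have h2 : Measurable fun q : T × ℝ => GammaR (β j q.1 + q.2 * I) :=
      measurable_GammaR.comp (by fun_prop)
    have h3 : Measurable fun q : T × ℝ => GammaR (γ j q.1 - q.2 * I) :=
      measurable_GammaR.comp (by fun_prop)
    have h4 : Measurable fun q : T × ℝ => GammaR (δ j q.1 - q.2 * I) :=
      measurable_GammaR.comp (by fun_prop)
    exact ((h1.mul h2).mul h3).mul h4
  have hG : ∀ j t, Integrable fun x : ℝ => GammaR (α j t + x * I) * GammaR (β j t + x * I) :=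
    fun j t => integrable_GammaR_mul_GammaR_vertical (by rw [ea]; exact hra j)
      (by rw [eb]; exact hrb j)
  have hb : ∀ j t x, ‖f j t x‖ ≤ ‖GammaR (α j t + x * I) * GammaR (β j t + x * I)‖ *
      (‖GammaR (rc j : ℂ)‖ * ‖GammaR (rd j : ℂ)‖) := by
    intro j t x
    simp only [hf]
    rw [mul_assoc (GammaR (α j t + x * I) * GammaR (β j t + x * I)), norm_mul,
      norm_mul (GammaR (γ j t - x * I))]
    gcongr
    · exact norm_GammaR_le_of_re_eq (hrc j) (by simp [ec])
    · exact norm_GammaR_le_of_re_eq (hrd j) (by simp [ed])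
  have hfi : ∀ j t, Integrable (f j t) := fun j t =>
    ((hG j t).norm.mul_const _).mono'
      ((hfm j).comp (measurable_const.prodMk measurable_id)).aestronglyMeasurable
      (.of_forall (hb j t))
  have hC : ∀ j t, ∫ x, ‖f j t x‖ ≤ (∫ x : ℝ, ‖GammaR (ra j + x * I)‖) * ‖GammaR (rb j : ℂ)‖ *
      (‖GammaR (rc j : ℂ)‖ * ‖GammaR (rd j : ℂ)‖) := by
    intro j t
    refine (integral_mono (hfi j t).norm ((hG j t).norm.mul_const _) (hb j t)).trans ?_
    rw [integral_mul_const]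
    gcongr
    have := integral_norm_GammaR_mul_GammaR_le (α := α j t) (β := β j t)
      (by rw [ea]; exact hra j) (by rw [eb]; exact hrb j)
    rwa [ea, eb] at this
  have h := integral_integral_mul_prod hF hfm hfi hC
  rw [← volume_pi] at h
  rw [h, ← integral_const_mul]
  congr 1 with t
  have hin : ∀ j, ∫ x, f j t x = 4 * Real.pi * (GammaR (α j t + γ j t) * GammaR (α j t + δ j t) *
        GammaR (β j t + γ j t) * GammaR (β j t + δ j t) /
        GammaR (α j t + β j t + γ j t + δ j t)) := fun j =>
    GammaR_barnes_first (by rw [ea]; exact hra j) (by rw [eb]; exact hrb j)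
      (by rw [ec]; exact hrc j) (by rw [ed]; exact hrd j)
  simp only [hin, Finset.prod_mul_distrib, Finset.prod_const, Finset.card_univ, Fintype.card_fin]
  ring

lemma prod_range_barnes_telescope (k : ℕ) (A B C D E : ℕ → ℂ) (hD : D k = E k) (hE : E k ≠ 0) :
    E (k + 1) * A 0 * C k * B k *
      ∏ j ∈ Finset.range k, (A (j + 1) * C j * B j * E j / D j) =
    E 0 * ∏ j ∈ Finset.range (k + 1), (A j * B j * C j * E (j + 1) / D j) := by
  have h : E 0 * ∏ j ∈ Finset.range (k + 1), E (j + 1) =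
      (∏ j ∈ Finset.range k, E j) * E k * E (k + 1) := by
    rw [← Finset.prod_range_succ, ← Finset.prod_range_succ,
      Finset.prod_range_succ' E (k + 1), mul_comm]
  simp only [Finset.prod_div_distrib, Finset.prod_mul_distrib]
  rw [← mul_div_assoc, ← mul_div_assoc, mul_left_comm (E 0), h, Finset.prod_range_succ' A k,
    Finset.prod_range_succ B, Finset.prod_range_succ C, Finset.prod_range_succ D, hD,
    ← mul_div_mul_right _ (∏ j ∈ Finset.range k, D j) hE]
  ring_nf

lemma absc_const_lt {k : ℕ} {e r : ℝ} (hr : 0 < r) (h : e < r) (j : ℕ) :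
    absc k (fun _ => e) j < r :=
  absc_lt hr fun _ _ _ => h

lemma integral_Ufun_mul_GammaR {k : ℕ} {a : ℕ → ℂ} (ha : ∀ j < k + 2, (a j).re = 0)
    {c : ℕ → ℝ} (hc : ∀ i < k + 1, 0 < c i) {e : ℝ} (he : 0 < e) (hec : ∀ i < k + 1, e < c i)
    {γ δ : ℕ → ℂ} (hγ : ∀ j < k + 1, c j < (γ j).re) (hδ : ∀ j < k + 1, c j < (δ j).re) :
    ∫ x : Fin (k + 1) → ℝ, Ufun (k + 2) a (vline c x) *
      ∏ j : Fin (k + 1), (GammaR (γ j - vline c x j) * GammaR (δ j - vline c x j)) =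
    ((2 * Real.pi) ^ k : ℂ)⁻¹ * (2 * Real.pi) ^ (k + 1) * ∫ t : Fin k → ℝ,
      Ufun (k + 1) (tildeA (k + 2) a) (vline (fun _ => e) t) * ∏ j : Fin (k + 1),
        (GammaR (a 0 - shiftX k a (vline (fun _ => e) t) j + γ j) *
          GammaR (a 0 - shiftX k a (vline (fun _ => e) t) j + δ j) *
          GammaR (γ j - shiftX k a (vline (fun _ => e) t) (j + 1)) *
          GammaR (δ j - shiftX k a (vline (fun _ => e) t) (j + 1)) /
          GammaR (a 0 - shiftX k a (vline (fun _ => e) t) j -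
            shiftX k a (vline (fun _ => e) t) (j + 1) + γ j + δ j)) := by
  obtain ⟨hI, hA⟩ := integrable_Ufun_vline_and_inversion k _ (tildeA_re ha) (fun _ => e)
    fun _ _ => he
  have hlt : ∀ i < k + 1, ∀ j, absc k (fun _ => e) j < c i := fun i hi j =>
    absc_const_lt (hc i hi) (hec i hi) j
  have hm := measurable_shiftX_vline k a (fun _ => e)
  have h := integral_integral_mul_prod_barnes hI
    (α := fun j t => c j + (a 0 - shiftX k a (vline (fun _ => e) t) j))
    (β := fun j t => c j - shiftX k a (vline (fun _ => e) t) (j + 1))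
    (γ := fun (j : Fin (k + 1)) _ => γ j - c j) (δ := fun (j : Fin (k + 1)) _ => δ j - c j)
    (ra := fun j => c j - absc k (fun _ => e) j)
    (rb := fun j => c j - absc k (fun _ => e) (j + 1))
    (rc := fun j => (γ j).re - c j) (rd := fun j => (δ j).re - c j)
    (fun j => by have := hm j; fun_prop) (fun j => by have := hm (j + 1); fun_prop)
    (fun j => by fun_prop) (fun j => by fun_prop)
    (fun j => by linarith [hlt j j.2 j]) (fun j => by linarith [hlt j j.2 (j + 1)])
    (fun j => by linarith [hγ j j.2]) (fun j => by linarith [hδ j j.2])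
    (fun j t => by simp [shiftX_vline_re ha, ha 0 (by omega), sub_eq_add_neg])
    (fun j t => by simp [shiftX_vline_re ha])
    (fun j t => by simp) (fun j t => by simp)
  have hU : ∀ x : Fin (k + 1) → ℝ, Ufun (k + 2) a (vline c x) *
      ∏ j : Fin (k + 1), (GammaR (γ j - vline c x j) * GammaR (δ j - vline c x j)) =
      ((2 * Real.pi) ^ k : ℂ)⁻¹ * (1 / 2) ^ (k + 1) * ∫ t : Fin k → ℝ,
        Ufun (k + 1) (tildeA (k + 2) a) (vline (fun _ => e) t) * ∏ j : Fin (k + 1),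
        (GammaR (c j + (a 0 - shiftX k a (vline (fun _ => e) t) j) + x j * I) *
          GammaR (c j - shiftX k a (vline (fun _ => e) t) (j + 1) + x j * I) *
          GammaR (γ j - c j - x j * I) * GammaR (δ j - c j - x j * I)) := by
    intro x
    have hre : ∀ j < k + 1, ((vline c x) j).re = c j := fun j _ => by simp [vline]
    rw [Ufun_eq_integral ha hI hA (fun j hj => by rw [hre j hj]; exact hlt j hj j)
      (fun j hj => by rw [hre j hj]; exact hlt j hj (j + 1)), mul_assoc,
      ← integral_mul_const, mul_assoc _ ((1 / 2 : ℂ) ^ (k + 1)),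
      ← integral_const_mul ((1 / 2 : ℂ) ^ (k + 1))]
    congr 1
    refine integral_congr_ae (.of_forall fun t => ?_)
    have e1 : ∀ u v w z : ℂ, u + v + (w - z) = u + (w - z) + v := fun _ _ _ _ => by ring
    have e2 : ∀ u v w : ℂ, u + v + -w = u - w + v := fun _ _ _ => by ring
    simp only [Finset.prod_mul_distrib, Finset.prod_const, Finset.card_univ, Fintype.card_fin,
      vline_apply c x, e1, e2, sub_add_eq_sub_sub]
    ring
  simp only [hU]
  rw [integral_const_mul, h]
  have hcst : ((1 / 2 : ℂ)) ^ (k + 1) * (4 * Real.pi) ^ (k + 1) = (2 * Real.pi) ^ (k + 1) := by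
    rw [← mul_pow]; congr 1; ring
  rw [← hcst, mul_assoc, mul_assoc, mul_assoc]
  have e1 : ∀ u v w : ℂ, u + v + (w - u) = v + w := fun _ _ _ => by ring
  have e2 : ∀ u v w : ℂ, u - v + (w - u) = w - v := fun _ _ _ => by ring
  have e3 : ∀ u v w x y : ℂ, u + v + (u - w) + (x - u) + (y - u) = v - w + x + y :=
    fun _ _ _ _ _ => by ring
  simp only [e1, e2, e3]

lemma prod_range_regroup (k : ℕ) (g h r s : ℕ → ℂ) :
    h 0 * (∏ j ∈ Finset.range k, (g j * h (j + 1))) * ∏ j ∈ Finset.range (k + 1), (r j * s j) =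
      h k * (r 0 * s k) * ∏ j ∈ Finset.range k, (g j * h j * r (j + 1) * s j) := by
  have e : h 0 * ∏ j ∈ Finset.range k, h (j + 1) = (∏ j ∈ Finset.range k, h j) * h k := by
    rw [← Finset.prod_range_succ, Finset.prod_range_succ', mul_comm]
  simp only [Finset.prod_mul_distrib]
  rw [Finset.prod_range_succ' r, Finset.prod_range_succ s, mul_left_comm (h 0), e]
  ring

/-- The Barnes-type identity, with the contour integral written as a real integral. -/
theorem Ufun_mul_prod_GammaR (m : ℕ) : ∀ a : ℕ → ℂ, (∀ j < m + 1, (a j).re = 0) →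
    ∀ σ : ℂ, 0 < σ.re → ∀ p : ℕ → ℂ, (∀ j < m, 0 < (p j).re) →
    ∀ c : ℕ → ℝ, (∀ i < m, 0 < c i) → (∀ j < m, c j < (PextL (m + 1) a p (j + 1)).re) →
    (∀ j < m, c j < (PextL (m + 1) a p (j + 2) + σ).re) →
    Ufun (m + 1) a p * ∏ j ∈ Finset.range (m + 1), GammaR (σ - a j) =
      GammaR (PextL (m + 1) a p 1 + σ) * (((4 * Real.pi) ^ m : ℂ)⁻¹ * ∫ t : Fin m → ℝ,
        Ufun (m + 1) a (vline c t) * ∏ j : Fin m,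
          (GammaR (PextL (m + 1) a p (j + 1) - vline c t j) *
            GammaR (PextL (m + 1) a p (j + 2) + σ - vline c t j))) := by
  induction m with
  | zero =>
    intro a _ σ _ p _ c _ _ _
    rw [integral_fin_zero]
    simp [Ufun_one, PextL, sumA, sub_eq_neg_add]
  | succ k ih =>
    intro a ha σ hσ p hp c hc hc1 hc2
    set P := PextL (k + 2) a p with hP
    have hPs : ∀ j < k + 1, P (j + 1) = p j := fun j hj => by
      simp [hP, PextL, Nat.succ_le_iff.2 hj]
    have hPl : P (k + 2) = -sumA (k + 2) a := by simp [hP, PextL]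
    obtain ⟨e, he, hec, hep, heσ⟩ : ∃ e : ℝ, 0 < e ∧ (∀ i < k + 1, e < c i) ∧
        (∀ i < k + 1, 2 * e < (p i).re) ∧ e < σ.re := by
      have hev : ∀ r : ℝ, 0 < r → ∀ᶠ e in nhdsWithin (0 : ℝ) (Set.Ioi 0), 2 * e < r :=
        fun r hr => Filter.mem_of_superset (Ioo_mem_nhdsGT (half_pos hr))
          fun e he => by have := he.2; change 2 * e < r; linarith
      have h1 := (Set.finite_Iio (k + 1)).eventually_all.2 fun i hi => hev _ (hc i hi)
      have h2 := (Set.finite_Iio (k + 1)).eventually_all.2 fun i hi => hev _ (hp i hi)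
      obtain ⟨e, h1, h2, h3, h4⟩ :=
        (h1.and (h2.and ((hev _ hσ).and self_mem_nhdsWithin))).exists
      have he : 0 < e := h4
      exact ⟨e, he, fun i hi => by linarith [h1 i hi], h2, by linarith⟩
    set z : (Fin k → ℝ) → ℕ → ℂ := fun t => vline (fun _ => e) t with hz
    set w : (Fin k → ℝ) → ℕ → ℂ := fun t => vline (fun _ => 2 * e) t with hw
    set X : (Fin k → ℝ) → ℕ → ℂ := fun t => shiftX k a (z t) with hX
    set V : (Fin k → ℝ) → ℂ := fun t => Ufun (k + 1) (tildeA (k + 2) a) (z t) with hV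
    have hR := integral_Ufun_mul_GammaR (γ := fun j => P (j + 1)) (δ := fun j => P (j + 2) + σ)
      ha hc he hec hc1 hc2
    simp only at hR
    obtain ⟨hI, hA⟩ := integrable_Ufun_vline_and_inversion k _ (tildeA_re ha) (fun _ => 2 * e)
      fun _ _ => by linarith
    have hU := Ufun_eq_integral ha hI hA (s := p)
      (fun j hj => absc_const_lt (hp j hj) (hep j hj) j)
      (fun j hj => absc_const_lt (hp j hj) (hep j hj) (j + 1))
    obtain ⟨hIz, -⟩ := integrable_Ufun_vline_and_inversion k _ (tildeA_re ha) (fun _ => e)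
      fun _ _ => he
    set δ : ℂ := a 0 / (k + 1) with hδ
    have hδre : δ.re = 0 := by
      have e : ((k : ℂ) + 1) = ((k + 1 : ℝ) : ℂ) := by push_cast; rfl
      rw [hδ, e, div_ofReal_re, ha 0 (by omega), zero_div]
    have hXs : ∀ t, ∀ j < k, X t (j + 1) = z t j + (j + 1) * δ := fun t j hj =>
      shiftX_succ a (z t) hj
    have hX0 : ∀ t, X t 0 = 0 := fun t => shiftX_zero k a (z t)
    have hXl : ∀ t, X t (k + 1) = a 0 - sumA (k + 2) a := fun t => shiftX_last k a (z t)
    set Y : (Fin k → ℝ) → ℕ → ℂ := fun x => shiftX k a (w x) with hY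
    have hYs : ∀ x (j : Fin k), Y x (j + 1) = 2 * e + (j + 1) * δ + x j * I := fun x j => by
      simp only [hY, hw]
      rw [shiftX_succ _ _ j.2, vline_apply]
      push_cast
      ring
    have hY0 : ∀ x, Y x 0 = 0 := fun x => shiftX_zero k a (w x)
    have hYl : ∀ x, Y x (k + 1) = a 0 - sumA (k + 2) a := fun x => shiftX_last k a (w x)
    have hQ : ∀ x i, PextL (k + 1) (tildeA (k + 2) a) (w x) i = Y x i - i * δ := fun x i => by
      simp only [hY, shiftX]; ring
    have hYre : ∀ x i, (Y x i).re = absc k (fun _ => 2 * e) i := fun x i =>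
      shiftX_vline_re ha _ x i
    have hXre : ∀ t i, (X t i).re = absc k (fun _ => e) i := fun t i =>
      shiftX_vline_re ha _ t i
    have hδn : ∀ i : ℕ, ((i : ℂ) * δ).re = 0 := fun i => by
      rw [← ofReal_natCast, re_ofReal_mul, hδre, mul_zero]
    have hIH : ∀ x, Ufun (k + 1) (tildeA (k + 2) a) (w x) *
        ∏ j ∈ Finset.range (k + 1), GammaR (σ - a (j + 1)) =
        GammaR (Y x 1 + σ - X x 0) * (((4 * Real.pi) ^ k : ℂ)⁻¹ * ∫ t, V t * ∏ j ∈ Finset.range k,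
          (GammaR (Y x (j + 1) - X t (j + 1)) * GammaR (Y x (j + 2) + σ - X t (j + 1)))) := by
      intro x
      have h := ih (tildeA (k + 2) a) (tildeA_re ha) (σ + δ) (by rw [add_re, hδre]; linarith)
        (w x) (fun j _ => by simp [hw, vline, he]) (fun _ => e) (fun _ _ => he)
        (fun j hj => by
          simp only [hQ, sub_re, hYre, hδn]
          simp [absc, Nat.succ_le_iff.2 hj, he])
        (fun j hj => by
          simp only [hQ, sub_re, add_re, hYre, hδn, hδre]
          have : 0 ≤ absc k (fun _ => 2 * e) (j + 2) := by
            unfold absc; split_ifs <;> linarith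
          linarith)
      simp only [hQ, tildeA_eq, ← hδ] at h
      have e1 : ∀ j : ℕ, σ + δ - (a (j + 1) + δ) = σ - a (j + 1) := fun j => by ring
      have e2 : Y x 1 - ((1 : ℕ) : ℂ) * δ + (σ + δ) = Y x 1 + σ - X x 0 := by
        rw [hX0]; push_cast; ring
      simp only [e1, e2] at h
      rw [h]
      congr 2
      refine integral_congr_ae (.of_forall fun t => ?_)
      simp only [Finset.prod_range]
      congr 1
      refine Finset.prod_congr rfl fun j _ => ?_
      rw [hXs t j j.2]
      simp only [hz]
      congr 2 <;> (push_cast; ring)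
    have hkey : ∀ x, Ufun (k + 1) (tildeA (k + 2) a) (w x) * (∏ j : Fin (k + 1),
        (1 / 2 * (GammaR (p j + (a 0 - Y x j)) * GammaR (p j + -Y x (j + 1))))) *
        (∏ j ∈ Finset.range (k + 1), GammaR (σ - a (j + 1))) =
        (1 / 2) ^ (k + 1) * ((4 * Real.pi) ^ k : ℂ)⁻¹ *
          (GammaR (p 0 + a 0) * GammaR (p k - (a 0 - sumA (k + 2) a))) *
        ∫ t, V t * GammaR (a 0 - sumA (k + 2) a + σ - X t k) * ∏ j : Fin k,
          (GammaR (2 * e + (j + 1) * δ - X t (j + 1) + x j * I) *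
            GammaR (2 * e + (j + 1) * δ + σ - X t j + x j * I) *
            GammaR (p (j + 1) + a 0 - 2 * e - (j + 1) * δ - x j * I) *
            GammaR (p j - 2 * e - (j + 1) * δ - x j * I)) := by
      intro x
      have hint : GammaR (Y x 1 + σ - X x 0) * (∫ t, V t * ∏ j ∈ Finset.range k,
          (GammaR (Y x (j + 1) - X t (j + 1)) * GammaR (Y x (j + 2) + σ - X t (j + 1)))) *
          (∏ j ∈ Finset.range (k + 1),
            (GammaR (p j + (a 0 - Y x j)) * GammaR (p j + -Y x (j + 1)))) =
          (GammaR (p 0 + a 0) * GammaR (p k - (a 0 - sumA (k + 2) a))) *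
          ∫ t, V t * GammaR (a 0 - sumA (k + 2) a + σ - X t k) * ∏ j : Fin k,
          (GammaR (2 * e + (j + 1) * δ - X t (j + 1) + x j * I) *
            GammaR (2 * e + (j + 1) * δ + σ - X t j + x j * I) *
            GammaR (p (j + 1) + a 0 - 2 * e - (j + 1) * δ - x j * I) *
            GammaR (p j - 2 * e - (j + 1) * δ - x j * I)) := by
        rw [mul_assoc, ← integral_mul_const, ← integral_const_mul, ← integral_const_mul]
        refine integral_congr_ae (.of_forall fun t => ?_)
        have h := prod_range_regroup k (fun j => GammaR (Y x (j + 1) - X t (j + 1)))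
          (fun j => GammaR (Y x (j + 1) + σ - X t j)) (fun j => GammaR (p j + (a 0 - Y x j)))
          (fun j => GammaR (p j + -Y x (j + 1)))
        have hprod : ∏ j ∈ Finset.range k, (GammaR (Y x (j + 1) - X t (j + 1)) *
            GammaR (Y x (j + 1) + σ - X t j) * GammaR (p (j + 1) + (a 0 - Y x (j + 1))) *
            GammaR (p j + -Y x (j + 1))) = ∏ j : Fin k,
          (GammaR (2 * e + (j + 1) * δ - X t (j + 1) + x j * I) *
            GammaR (2 * e + (j + 1) * δ + σ - X t j + x j * I) *
            GammaR (p (j + 1) + a 0 - 2 * e - (j + 1) * δ - x j * I) *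
            GammaR (p j - 2 * e - (j + 1) * δ - x j * I)) := by
          rw [Finset.prod_range]
          refine Finset.prod_congr rfl fun j _ => ?_
          rw [hYs x j]
          congr 1
          · congr 1
            · congr 2 <;> ring
            · congr 1; ring
          · congr 1; ring
        simp only [hY0, hYl, hX0, hprod, zero_add, sub_zero] at h ⊢
        rw [← sub_eq_add_neg] at h
        linear_combination V t * h
      rw [mul_right_comm, hIH, Finset.prod_mul_distrib, Finset.prod_const, Finset.card_univ,
        Fintype.card_fin, ← Finset.prod_range fun j => GammaR (p j + (a 0 - Y x j)) *
          GammaR (p j + -Y x (j + 1))]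
      linear_combination (1 / 2) ^ (k + 1) * ((4 * Real.pi) ^ k : ℂ)⁻¹ * hint
    have hmX : ∀ i, Measurable fun t => X t i := measurable_shiftX_vline k a (fun _ => e)
    have hXlt : ∀ i, absc k (fun _ => e) i < σ.re := fun i => absc_const_lt hσ heσ i
    have hS : (sumA (k + 2) a).re = 0 := sumA_re ha
    have ha0 : (a 0).re = 0 := ha 0 (by omega)
    have hVI : Integrable fun t => V t * GammaR (a 0 - sumA (k + 2) a + σ - X t k) := by
      refine hIz.mul_bdd (c := ‖GammaR ((σ.re - absc k (fun _ => e) k : ℝ) : ℂ)‖) ?_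
        (.of_forall fun t => ?_)
      · have := hmX k
        exact (measurable_GammaR.comp (by fun_prop)).aestronglyMeasurable
      · exact norm_GammaR_le_of_re_eq (by linarith [hXlt k]) (by simp [hXre, hS, ha0])
    have h2e : ∀ j, absc k (fun _ => e) j < 2 * e := absc_const_lt (by linarith) (by linarith)
    have hδn' : ∀ j : Fin k, (((j : ℂ) + 1) * δ).re = 0 := fun j => by
      rw [← hδn (j + 1)]; push_cast; rfl
    have h2re : ((2 : ℂ) * e).re = 2 * e := by simp
    have hB := integral_integral_mul_prod_barnes hVI
      (α := fun (j : Fin k) t => 2 * e + (j + 1) * δ - X t (j + 1))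
      (β := fun j t => 2 * e + (j + 1) * δ + σ - X t j)
      (γ := fun j _ => p (j + 1) + a 0 - 2 * e - (j + 1) * δ)
      (δ := fun j _ => p j - 2 * e - (j + 1) * δ)
      (ra := fun j => 2 * e - absc k (fun _ => e) (j + 1))
      (rb := fun j => 2 * e + σ.re - absc k (fun _ => e) j)
      (rc := fun j => (p (j + 1)).re - 2 * e) (rd := fun j => (p j).re - 2 * e)
      (fun j => by have := hmX (j + 1); fun_prop) (fun j => by have := hmX j; fun_prop)
      (fun j => by fun_prop) (fun j => by fun_prop)
      (fun j => by linarith [h2e (j + 1)]) (fun j => by linarith [h2e j])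
      (fun j => by linarith [hep (j + 1) (by omega)]) (fun j => by linarith [hep j (by omega)])
      (fun j t => by rw [sub_re, add_re, hδn', hXre, h2re, add_zero])
      (fun j t => by rw [sub_re, add_re, add_re, hδn', hXre, h2re, add_zero])
      (fun j t => by rw [sub_re, sub_re, add_re, hδn', h2re, ha0]; ring)
      (fun j t => by rw [sub_re, sub_re, hδn', h2re, sub_zero])
    set A : (Fin k → ℝ) → ℕ → ℂ := fun t j => GammaR (a 0 - X t j + P (j + 1)) with hAdef
    set B : (Fin k → ℝ) → ℕ → ℂ := fun t j => GammaR (a 0 - X t j + (P (j + 2) + σ)) with hBdef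
    set C : (Fin k → ℝ) → ℕ → ℂ := fun t j => GammaR (P (j + 1) - X t (j + 1)) with hCdef
    set D : (Fin k → ℝ) → ℕ → ℂ := fun t j =>
      GammaR (a 0 - X t j - X t (j + 1) + P (j + 1) + (P (j + 2) + σ)) with hDdef
    set E : (Fin k → ℝ) → ℕ → ℂ := fun t j => GammaR (P (j + 1) + σ - X t j) with hEdef
    have hBar : ∀ t, ∏ j : Fin k,
        (GammaR (2 * e + (j + 1) * δ - X t (j + 1) +
            (p (j + 1) + a 0 - 2 * e - (j + 1) * δ)) *
          GammaR (2 * e + (j + 1) * δ - X t (j + 1) + (p j - 2 * e - (j + 1) * δ)) *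
          GammaR (2 * e + (j + 1) * δ + σ - X t j + (p (j + 1) + a 0 - 2 * e - (j + 1) * δ)) *
          GammaR (2 * e + (j + 1) * δ + σ - X t j + (p j - 2 * e - (j + 1) * δ)) /
          GammaR (2 * e + (j + 1) * δ - X t (j + 1) + (2 * e + (j + 1) * δ + σ - X t j) +
            (p (j + 1) + a 0 - 2 * e - (j + 1) * δ) + (p j - 2 * e - (j + 1) * δ))) =
        ∏ j ∈ Finset.range k, (A t (j + 1) * C t j * B t j * E t j / D t j) := by
      intro t
      rw [Finset.prod_range]
      refine Finset.prod_congr rfl fun j _ => ?_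
      simp only [hAdef, hBdef, hCdef, hDdef, hEdef, add_assoc, Nat.reduceAdd]
      rw [hPs j (by omega), hPs (j + 1) (by omega)]
      congr 1
      · congr 1
        · congr 1
          · congr 2 <;> ring
          · congr 1; ring
        · congr 1; ring
      · congr 1; ring
    simp only [hBar] at hB
    have hR' : (∫ x : Fin (k + 1) → ℝ, Ufun (k + 2) a (vline c x) * ∏ j : Fin (k + 1),
        (GammaR (P (j + 1) - vline c x j) * GammaR (P (j + 2) + σ - vline c x j))) =
        ((2 * Real.pi) ^ k : ℂ)⁻¹ * (2 * Real.pi) ^ (k + 1) * ∫ t, V t *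
          ∏ j ∈ Finset.range (k + 1), (A t j * B t j * C t j * E t (j + 1) / D t j) := by
      simp only [Finset.prod_range]
      exact hR
    have hL : (∫ x, Ufun (k + 1) (tildeA (k + 2) a) (w x) * ∏ j : Fin (k + 1),
        (1 / 2 * (GammaR (p j + (a 0 - Y x j)) * GammaR (p j + -Y x (j + 1))))) *
        (∏ j ∈ Finset.range (k + 1), GammaR (σ - a (j + 1))) =
        (1 / 2) ^ (k + 1) * ((4 * Real.pi) ^ k : ℂ)⁻¹ *
          (GammaR (p 0 + a 0) * GammaR (p k - (a 0 - sumA (k + 2) a))) *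
        ((4 * Real.pi) ^ k * ∫ t, V t * GammaR (a 0 - sumA (k + 2) a + σ - X t k) *
          ∏ j ∈ Finset.range k, (A t (j + 1) * C t j * B t j * E t j / D t j)) := by
      rw [← integral_mul_const]
      simp only [hkey]
      rw [integral_const_mul, hB]
    have htel : GammaR (σ - a 0) * (GammaR (p 0 + a 0) *
        GammaR (p k - (a 0 - sumA (k + 2) a))) *
        ∫ t, V t * GammaR (a 0 - sumA (k + 2) a + σ - X t k) *
          ∏ j ∈ Finset.range k, (A t (j + 1) * C t j * B t j * E t j / D t j) =
        GammaR (P 1 + σ) * ∫ t, V t *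
          ∏ j ∈ Finset.range (k + 1), (A t j * B t j * C t j * E t (j + 1) / D t j) := by
      rw [← integral_const_mul, ← integral_const_mul]
      refine integral_congr_ae (.of_forall fun t => ?_)
      have h := prod_range_barnes_telescope k (A t) (B t) (C t) (D t) (E t)
        (by
          simp only [hDdef, hEdef]
          rw [hXl, hPl]
          congr 1; ring)
        (by
          refine GammaR_ne_zero ?_
          rw [hPs k (by omega), sub_re, add_re, hXre]
          linarith [hXlt k, hp k (by omega)])
      have hE1 : E t (k + 1) = GammaR (σ - a 0) := by
        simp only [hEdef, add_assoc, Nat.reduceAdd]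
        rw [hXl, hPl]
        congr 1; ring
      have hE0 : E t 0 = GammaR (P 1 + σ) := by simp only [hEdef, hX0, sub_zero, zero_add]
      have hA0 : A t 0 = GammaR (p 0 + a 0) := by
        simp only [hAdef]
        rw [hX0, hPs 0 (by omega)]
        congr 1; ring
      have hCk : C t k = GammaR (p k - (a 0 - sumA (k + 2) a)) := by
        simp only [hCdef]
        rw [hXl, hPs k (by omega)]
      have hBk : B t k = GammaR (a 0 - sumA (k + 2) a + σ - X t k) := by
        simp only [hBdef]
        rw [hPl]
        congr 1; ring
      rw [hE1, hE0, hA0, hCk, hBk] at h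
      linear_combination V t * h
    rw [hR', hU, Finset.prod_range_succ' _ (k + 1)]
    have hpi : (Real.pi : ℂ) ≠ 0 := ofReal_ne_zero.mpr Real.pi_ne_zero
    have hc1 : ((4 * Real.pi) ^ k : ℂ)⁻¹ * (4 * Real.pi) ^ k = 1 :=
      inv_mul_cancel₀ (pow_ne_zero _ (mul_ne_zero (by norm_num) hpi))
    have hc2 : ((4 * Real.pi) ^ (k + 1) : ℂ)⁻¹ * (2 * Real.pi) ^ (k + 1) = (1 / 2) ^ (k + 1) := by
      rw [← inv_pow, ← mul_pow]
      congr 1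
      field_simp
      norm_num
    generalize (∫ t, V t * GammaR (a 0 - sumA (k + 2) a + σ - X t k) *
      ∏ j ∈ Finset.range k, (A t (j + 1) * C t j * B t j * E t j / D t j)) = S at hL htel
    generalize (∫ t, V t *
      ∏ j ∈ Finset.range (k + 1), (A t j * B t j * C t j * E t (j + 1) / D t j)) = R at htel ⊢
    linear_combination ((2 * Real.pi) ^ k : ℂ)⁻¹ * GammaR (σ - a 0) * hL +
      ((2 * Real.pi) ^ k : ℂ)⁻¹ * GammaR (σ - a 0) * (1 / 2) ^ (k + 1) *
        (GammaR (p 0 + a 0) * GammaR (p k - (a 0 - sumA (k + 2) a))) * S * hc1 +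
      ((2 * Real.pi) ^ k : ℂ)⁻¹ * (1 / 2) ^ (k + 1) * htel -
      ((2 * Real.pi) ^ k : ℂ)⁻¹ * GammaR (P 1 + σ) * R * hc2

/-- Barnes-type self-reproducing identity for `U_{n,a}`
(Proposition 1.8(2) of Ishii–Stade). -/
theorem U_barnes_identity_two (n : ℕ) (hn : 2 ≤ n) (a : ℕ → ℂ)
    (ha : ∀ j < n, (a j).re = 0) (σ : ℂ) (hσ : 0 < σ.re)
    (p : ℕ → ℂ) (hp : ∀ j < n - 1, 0 < (p j).re)
    (c : ℕ → ℝ) (hc : ∀ i < n - 1, 0 < c i)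
    (hΓ : ∀ j, 1 ≤ j → j ≤ n - 1 →
      0 < (PextL n a p j - (c (j - 1) : ℂ)).re ∧
      0 < (PextL n a p (j + 1) - (c (j - 1) : ℂ) + σ).re) :
    Ufun n a p =
      GammaR (p 0 + σ) / (∏ j ∈ Finset.range n, GammaR (σ - a j)) *
        (((4 * (Real.pi : ℂ) * Complex.I) ^ (n - 1))⁻¹ *
          VIntK (n - 1) c (fun q =>
            Ufun n a q *
              ∏ j ∈ Finset.Icc 1 (n - 1),
                GammaR (PextL n a p j - q (j - 1)) *
                  GammaR (PextL n a p (j + 1) - q (j - 1) + σ))) := by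
  obtain ⟨m, rfl⟩ : ∃ m, n = m + 1 := ⟨n - 1, by omega⟩
  simp only [Nat.add_sub_cancel] at hp hc hΓ ⊢
  have hsub : ∀ j < m, c j < (PextL (m + 1) a p (j + 1)).re ∧
      c j < (PextL (m + 1) a p (j + 2) + σ).re := by
    intro j hj
    have h := hΓ (j + 1) (by omega) (by omega)
    simp only [Nat.add_sub_cancel, sub_re, add_re, ofReal_re] at h ⊢
    exact ⟨by linarith [h.1], by linarith [h.2]⟩
  have h := Ufun_mul_prod_GammaR m a ha σ hσ p hp c hc (fun j hj => (hsub j hj).1)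
    fun j hj => (hsub j hj).2
  have hP : PextL (m + 1) a p 1 = p 0 := by simp [PextL, show 1 ≤ m by omega]
  have hne : ∏ j ∈ Finset.range (m + 1), GammaR (σ - a j) ≠ 0 :=
    Finset.prod_ne_zero_iff.2 fun j hj => GammaR_ne_zero (by
      rwa [sub_re, ha j (Finset.mem_range.1 hj), sub_zero])
  have hprod : ∀ q : ℕ → ℂ, ∏ j ∈ Finset.Icc 1 m, (GammaR (PextL (m + 1) a p j - q (j - 1)) *
      GammaR (PextL (m + 1) a p (j + 1) - q (j - 1) + σ)) =
      ∏ j : Fin m, (GammaR (PextL (m + 1) a p (j + 1) - q j) *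
        GammaR (PextL (m + 1) a p (j + 2) + σ - q j)) := by
    intro q
    rw [← Finset.Ico_add_one_right_eq_Icc, Finset.prod_Ico_eq_prod_range, Nat.add_sub_cancel,
      Finset.prod_range]
    refine Finset.prod_congr rfl fun j _ => ?_
    rw [add_comm 1 (j : ℕ), Nat.add_sub_cancel, sub_add_eq_add_sub]
  have hV : VIntK m c (fun q => Ufun (m + 1) a q * ∏ j ∈ Finset.Icc 1 m,
      (GammaR (PextL (m + 1) a p j - q (j - 1)) *
        GammaR (PextL (m + 1) a p (j + 1) - q (j - 1) + σ))) =
      I ^ m * ∫ t : Fin m → ℝ, Ufun (m + 1) a (vline c t) * ∏ j : Fin m,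
        (GammaR (PextL (m + 1) a p (j + 1) - vline c t j) *
          GammaR (PextL (m + 1) a p (j + 2) + σ - vline c t j)) := by
    simp only [← hprod]
    rfl
  rw [hP] at h
  rw [eq_comm, div_mul_eq_mul_div, div_eq_iff hne, h]
  congr 1
  rw [hV, ← mul_assoc, mul_pow _ I, mul_inv, mul_assoc _ (I ^ m)⁻¹,
    inv_mul_cancel₀ (pow_ne_zero _ I_ne_zero), mul_one]

end
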